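/- arXiv:2407.15637 — 5 statements merged into one kernel-verified Lean document; each statement's English description precedes it below -/
import Mathlib

section
/- Let K be a field and n ≥ 2, and let R = R(K[X_1, ..., X_n]) be the reciprocal complement of the polynomial ring. Then R is not coherent: there exists a finitely generated ideal of R that is not finitely presented as an R-module. In particular, R is not Noetherian. -/
/-!
Grouping two of the variables as `X`, `Y` and the others into a domain `T`, the polynomial ring is
`T[X][Y]`. Let `R` be its reciprocal complement. The ideal `(1 / X, 1 / Y)` of `R` is not finitely
presented, because projecting its relations to the first coordinate gives the conductor
`J = {t ∈ R | t * Y / X ∈ R}`, which is not finitely generated (`RecipCompl.conductor_not_fg`).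

To see this, write degrees additively and let `v_N` be the degree in `X` after substituting
`Y = Z - X ^ N`, with `Z` of degree `0`. These degrees are nonpositive on `R`, so an upper bound for
`v_N` on generators of an ideal holds on the whole ideal. The element
`1 / (X ^ (N - 1) * (Y + X ^ N))` is in `J`, since its product with `Y / X` is
`1 / X ^ N - 1 / (Y + X ^ N)`, and its `v_N` is `1 - N`. On the other hand every fixed `t ∈ J` has
`v_N t ≤ -N` for all large `N` (`RecipCompl.eventually_val_le`). Indeed each element of `R` has an
expansion `a + b / Y + O(Y⁻²)`, where `v_N a` and `v_N b` are at most `0` and do not depend on `N`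
(`RecipCompl.exists_hasExpansion`). For `t ∈ J` the condition `t * Y / X ∈ R` forces `a = 0`, and
then `v_N t` is at most the larger of `v_N b - N` and `D - 2 N`, for a constant `D`. Hence no finite
set generates `J`.
-/

/-- The reciprocal complement `R(T)` of an integral domain `T` with fraction field `F`:
the subring of `F` generated by the reciprocals of the nonzero elements of `T`. -/
def ReciprocalComplement (T F : Type*) [CommRing T] [Field F] [Algebra T F] : Subring F :=
  Subring.closure {x : F | ∃ f : T, f ≠ 0 ∧ x = (algebraMap T F f)⁻¹}

namespace RecipCompl

open Polynomial WithZero Filter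
open scoped Polynomial.Bivariate

/-! ### The shear `Y ↦ Z - X ^ N` -/

section subst
variable {T : Type*} [CommRing T]

/-- The injective endomorphism of the bivariate polynomials that rewrites a polynomial in `X`, `Y` as
a polynomial in `X` and `Z = Y + X ^ N`. In the source `T[X][Y]` the outer variable is `Y`; in the target the outer variable is `X`
and the inner one is `Z`, so that `natDegree` after the shear is the degree in `X` for fixed `Z`. -/
noncomputable def shear (N : ℕ) : T[X][Y] →+* T[X][Y] :=
  (Bivariate.swap (R := T)).toRingEquiv.toRingHom.comp
    (taylorAlgHom (-(X : T[X]) ^ N)).toRingHom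

lemma shear_apply (N : ℕ) (f : T[X][Y]) :
    shear N f = Bivariate.swap (R := T) (taylor (-(X : T[X]) ^ N) f) := rfl

lemma shear_injective (N : ℕ) : Function.Injective (shear (T := T) N) :=
  (Bivariate.swap (R := T)).injective.comp (taylor_injective _)

lemma shear_C (N : ℕ) (c : T[X]) : shear N (C c) = c.map C := by
  rw [shear_apply, taylor_C, Bivariate.swap_C]

lemma shear_Y (N : ℕ) : shear N (Y : T[X][Y]) = C X - X ^ N := by
  rw [shear_apply, taylor_X, map_add, Bivariate.swap_Y, Bivariate.swap_C]
  simp [sub_eq_add_neg]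

end subst

/-! ### The valuations `val N` -/

section val
variable (T : Type*) [CommRing T] [IsDomain T]
variable (F : Type*) [Field F] [Algebra T[X][Y] F] [IsFractionRing T[X][Y] F]

/-- The shear followed by the embedding of `T[Z][X]` into `E(X)`, where `E` is the fraction field
of `T[Z]`. -/
noncomputable def toRatFunc (N : ℕ) : T[X][Y] →+* RatFunc (FractionRing T[X]) :=
  (algebraMap (FractionRing T[X])[X] (RatFunc (FractionRing T[X]))).comp
    ((mapRingHom (algebraMap T[X] (FractionRing T[X]))).comp (shear N))

lemma toRatFunc_injective (N : ℕ) : Function.Injective (toRatFunc T N) :=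
  (IsFractionRing.injective (FractionRing T[X])[X] (RatFunc (FractionRing T[X]))).comp
    ((Polynomial.map_injective (algebraMap T[X] (FractionRing T[X]))
      (IsFractionRing.injective _ _)).comp (shear_injective N))

/-- The field embedding `F → E(X)` that extends `toRatFunc`. -/
noncomputable def expand (N : ℕ) : F →+* RatFunc (FractionRing T[X]) :=
  IsFractionRing.lift (A := T[X][Y]) (toRatFunc_injective T N)

lemma expand_algebraMap (N : ℕ) (f : T[X][Y]) :
    expand T F N (algebraMap _ F f) = toRatFunc T N f :=
  IsFractionRing.lift_algebraMap _ _

open scoped Classical in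
/-- The valuation of `F` that measures the degree in `X` after the substitution `Y = Z - X ^ N`,
multiplicatively: an element of degree `d` has value `exp d`. -/
noncomputable def val (N : ℕ) : Valuation F ℤᵐ⁰ :=
  (RatFunc.inftyValuation (FractionRing T[X])).comap (expand T F N)

variable {T}
lemma val_algebraMap (N : ℕ) {f : T[X][Y]} (hf : f ≠ 0) :
    val T F N (algebraMap _ F f) = exp ((shear N f).natDegree : ℤ) := by
  classical
  have h : (shear N f).map (algebraMap T[X] (FractionRing T[X])) ≠ 0 := by
    rw [Polynomial.map_ne_zero_iff (IsFractionRing.injective T[X] (FractionRing T[X]))]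
    exact (map_ne_zero_iff _ (shear_injective N)).2 hf
  rw [val, Valuation.comap_apply, expand_algebraMap]
  change RatFunc.inftyValuation _ (algebraMap (FractionRing T[X])[X] _
    (Polynomial.map (algebraMap T[X] (FractionRing T[X])) (shear N f))) = _
  rw [RatFunc.inftyValuation_apply, RatFunc.inftyValuation.polynomial _ h,
    natDegree_map_eq_of_injective (IsFractionRing.injective T[X] (FractionRing T[X]))]

lemma val_C (N : ℕ) {c : T[X]} (hc : c ≠ 0) :
    val T F N (algebraMap _ F (C c)) = exp (c.natDegree : ℤ) := by
  rw [val_algebraMap F N (by simpa using hc), shear_C, natDegree_map_eq_of_injective C_injective]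

lemma val_Y (N : ℕ) : val T F N (algebraMap T[X][Y] F Y) = exp (N : ℤ) := by
  rw [val_algebraMap F N X_ne_zero, shear_Y, natDegree_sub, natDegree_sub_C, natDegree_X_pow]

lemma val_Y_add (N : ℕ) : val T F N (algebraMap T[X][Y] F (Y + C X ^ N)) = 1 := by
  have h : shear N (Y + C X ^ N : T[X][Y]) = C X := by
    rw [map_add, map_pow, shear_Y, shear_C, map_X]; ring
  have h0 : (Y + C X ^ N : T[X][Y]) ≠ 0 := by
    rw [← C_pow]; exact X_add_C_ne_zero _
  rw [val_algebraMap F N h0, h, natDegree_C]; simp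

/-- For `N` large, `val N` orders the polynomials in `Y` lexicographically: first by the degree in
`Y`, which has weight `N`, then by the degree in `X` of the leading coefficient. -/
lemma eventually_val_eq (f : T[X][Y]) (hf : f ≠ 0) : ∀ᶠ N : ℕ in atTop,
    val T F N (algebraMap _ F f) = exp (N * f.natDegree + f.leadingCoeff.natDegree : ℤ) := by
  induction hn : f.natDegree using Nat.strong_induction_on generalizing f with
  | _ p ih =>
    have hm : ∀ N : ℕ, val T F N (algebraMap _ F (monomial f.natDegree f.leadingCoeff)) =
        exp (N * f.natDegree + f.leadingCoeff.natDegree : ℤ) := by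
      intro N
      rw [← C_mul_X_pow_eq_monomial, map_mul, map_pow, map_mul, map_pow,
        val_C F N (leadingCoeff_ne_zero.2 hf), val_Y F N, ← exp_nsmul, ← exp_add]
      congr 1
      simp; ring
    have hsum : ∀ N : ℕ, val T F N (algebraMap _ F f) =
        val T F N (algebraMap _ F f.eraseLead +
          algebraMap _ F (monomial f.natDegree f.leadingCoeff)) := by
      intro N
      rw [← map_add, f.eraseLead_add_monomial_natDegree_leadingCoeff]
    by_cases h0 : f.eraseLead = 0
    · refine .of_forall fun N => ?_
      rw [hsum, h0, map_zero, zero_add, hm, hn]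
    · have h := (f.eraseLead_natDegree_lt_or_eraseLead_eq_zero).resolve_right h0
      filter_upwards [ih _ (hn ▸ h) _ h0 rfl,
        eventually_gt_atTop (f.eraseLead.leadingCoeff.natDegree)] with N h1 h3
      rw [hsum, Valuation.map_add_eq_of_lt_right, hm N, hn]
      rw [hm N, h1, exp_lt_exp]
      have h' : (f.eraseLead.natDegree : ℤ) + 1 ≤ f.natDegree := by exact_mod_cast h
      have := mul_le_mul_of_nonneg_left h' (Int.natCast_nonneg N)
      have h3' : (f.eraseLead.leadingCoeff.natDegree : ℤ) < N := by exact_mod_cast h3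
      -- The terms of lower degree in `Y` lose a full `N`, more than their coefficients can regain.
      nlinarith

lemma val_mul_le {v : Valuation F ℤᵐ⁰} {a b : F} {k l : ℤ} (ha : v a ≤ exp k)
    (hb : v b ≤ exp l) : v (a * b) ≤ exp (k + l) := by
  rw [map_mul, exp_add]; exact mul_le_mul' ha hb

/-! ### Expansions in `Y⁻¹` -/

variable (T)

/-- The elements of `F` whose image under `expand N` does not depend on `N` and has degree at most
`0` in `X`. It contains the reciprocals of the polynomials in `X` alone, and serves as the ring of
coefficients for expansions in `Y⁻¹`. -/
noncomputable def coeffRing : Subring F :=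
  (⨅ N, (expand T F N).eqLocus (expand T F 0)) ⊓ (val T F 0).integer

variable {T F}

lemma val_eq_of_mem {a : F} (ha : a ∈ coeffRing T F) (N : ℕ) : val T F N a = val T F 0 a := by
  have h := (Subring.mem_iInf.1 (Subring.mem_inf.1 ha).1) N
  rw [val, val, Valuation.comap_apply, Valuation.comap_apply,
    show expand T F N a = expand T F 0 a from h]

lemma val_le_of_mem {a : F} (ha : a ∈ coeffRing T F) (N : ℕ) : val T F N a ≤ exp 0 := by
  rw [val_eq_of_mem ha]; exact (Subring.mem_inf.1 ha).2

lemma inv_C_mem {c : T[X]} (hc : c ≠ 0) :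
    (algebraMap T[X][Y] F (C c))⁻¹ ∈ coeffRing T F := by
  refine Subring.mem_inf.2 ⟨Subring.mem_iInf.2 fun N => ?_, ?_⟩
  · change expand T F N _ = expand T F 0 _
    rw [map_inv₀, map_inv₀, expand_algebraMap, expand_algebraMap]
    simp only [toRatFunc, RingHom.comp_apply, shear_C]
  · rw [Valuation.mem_integer_iff, map_inv₀, val_C F 0 hc, ← exp_neg, ← exp_zero, exp_le_exp]
    omega

lemma val_Y_inv (N : ℕ) :
    val T F N (algebraMap T[X][Y] F Y)⁻¹ ≤ exp (-(N : ℤ)) := by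
  rw [map_inv₀, val_Y F N, exp_neg]

variable (T F)

/-- The statement `r = a + b / Y + O(Y⁻²)`, where the error term is measured by the valuations
`val N` for large `N`, with a constant `D` that does not depend on `N`. -/
def HasExpansion (r a b : F) : Prop :=
  ∃ D : ℤ, ∀ᶠ N : ℕ in atTop,
    val T F N (r - a - b * (algebraMap T[X][Y] F Y)⁻¹) ≤ exp (D - 2 * N)

variable {T F}

lemma HasExpansion.add {r a b r' a' b' : F} (h : HasExpansion T F r a b)
    (h' : HasExpansion T F r' a' b') : HasExpansion T F (r + r') (a + a') (b + b') := by
  obtain ⟨D, hD⟩ := h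
  obtain ⟨D', hD'⟩ := h'
  refine ⟨max D D', ?_⟩
  filter_upwards [hD, hD'] with N h1 h2
  rw [show r + r' - (a + a') - (b + b') * (algebraMap T[X][Y] F Y)⁻¹ =
    (r - a - b * (algebraMap T[X][Y] F Y)⁻¹) + (r' - a' - b' * (algebraMap T[X][Y] F Y)⁻¹)
    by ring]
  exact Valuation.map_add_le _ (h1.trans (exp_le_exp.2 (by omega)))
    (h2.trans (exp_le_exp.2 (by omega)))

lemma HasExpansion.neg {r a b : F} (h : HasExpansion T F r a b) :
    HasExpansion T F (-r) (-a) (-b) := by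
  obtain ⟨D, hD⟩ := h
  refine ⟨D, ?_⟩
  filter_upwards [hD] with N h1
  rwa [← Valuation.map_neg, show -(-r - -a - -b * (algebraMap T[X][Y] F Y)⁻¹) =
    r - a - b * (algebraMap T[X][Y] F Y)⁻¹ by ring]

lemma hasExpansion_self (a : F) : HasExpansion T F a a 0 :=
  ⟨0, by simp⟩

lemma HasExpansion.mul {r a b r' a' b' : F} (h : HasExpansion T F r a b)
    (h' : HasExpansion T F r' a' b') (ha : a ∈ coeffRing T F) (hb : b ∈ coeffRing T F)
    (ha' : a' ∈ coeffRing T F) (hb' : b' ∈ coeffRing T F) :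
    HasExpansion T F (r * r') (a * a') (a * b' + a' * b) := by
  obtain ⟨D, hD⟩ := h
  obtain ⟨D', hD'⟩ := h'
  refine ⟨|D| + |D'|, ?_⟩
  filter_upwards [hD, hD'] with N h1 h2
  set z := (algebraMap T[X][Y] F Y)⁻¹ with hz
  have hzN : val T F N z ≤ exp (-(N : ℤ)) := val_Y_inv N
  set e := r - a - b * z with he
  set e' := r' - a' - b' * z with he'
  have k1 := le_abs_self D
  have k2 := le_abs_self D'
  have k3 := abs_nonneg D
  have k4 := abs_nonneg D'
  have hbz := val_mul_le F (val_le_of_mem hb N) hzN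
  have hbz' := val_mul_le F (val_le_of_mem hb' N) hzN
  have hr' : val T F N r' ≤ exp |D'| := by
    rw [show r' = a' + b' * z + e' by rw [he']; ring]
    refine Valuation.map_add_le _ (Valuation.map_add_le _ ?_ ?_) ?_
    · exact (val_le_of_mem ha' N).trans (exp_le_exp.2 (by omega))
    · exact hbz'.trans (exp_le_exp.2 (by omega))
    · exact h2.trans (exp_le_exp.2 (by omega))
  have hab : val T F N (a + b * z) ≤ exp 0 :=
    Valuation.map_add_le _ (val_le_of_mem ha N) (hbz.trans (exp_le_exp.2 (by omega)))
  rw [show r * r' - a * a' - (a * b' + a' * b) * z =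
    (b * z) * (b' * z) + e * r' + (a + b * z) * e' by rw [he, he']; ring]
  refine Valuation.map_add_le _ (Valuation.map_add_le _ ?_ ?_) ?_
  · exact (val_mul_le F hbz hbz').trans (exp_le_exp.2 (by omega))
  · exact (val_mul_le F h1 hr').trans (exp_le_exp.2 (by omega))
  · exact (val_mul_le F hab h2).trans (exp_le_exp.2 (by omega))

/-- The reciprocal of a polynomial in `X` is its own expansion, the reciprocal of `c Y + d` is
`c⁻¹ / Y + O(Y⁻²)`, and the reciprocal of a polynomial of higher degree in `Y` is `O(Y⁻²)`. -/
lemma exists_hasExpansion_inv {f : T[X][Y]} (hf : f ≠ 0) :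
    ∃ a ∈ coeffRing T F, ∃ b ∈ coeffRing T F,
      HasExpansion T F (algebraMap T[X][Y] F f)⁻¹ a b := by
  have hinj : Function.Injective (algebraMap T[X][Y] F) := IsFractionRing.injective _ _
  have hY : algebraMap T[X][Y] F Y ≠ 0 := (map_ne_zero_iff _ hinj).2 X_ne_zero
  have hfF : algebraMap T[X][Y] F f ≠ 0 := (map_ne_zero_iff _ hinj).2 hf
  rcases Nat.lt_or_ge f.natDegree 2 with h2 | h2
  · rcases Nat.eq_zero_or_pos f.natDegree with h0 | h1
    · rw [eq_C_of_natDegree_eq_zero h0] at hf ⊢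
      exact ⟨_, inv_C_mem (by simpa using hf), 0, zero_mem _, hasExpansion_self _⟩
    · have h1 : f.natDegree = 1 := by omega
      have hc : f.coeff 1 ≠ 0 := by
        rw [← h1]; exact leadingCoeff_ne_zero.2 hf
      have hcF : algebraMap T[X][Y] F (C (f.coeff 1)) ≠ 0 :=
        (map_ne_zero_iff _ hinj).2 (by simpa using hc)
      refine ⟨0, zero_mem _, _, inv_C_mem hc, (f.coeff 0).natDegree, ?_⟩
      filter_upwards [eventually_val_eq F f hf] with N hN
      have key : (algebraMap T[X][Y] F f)⁻¹ - 0 -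
          (algebraMap T[X][Y] F (C (f.coeff 1)))⁻¹ * (algebraMap T[X][Y] F Y)⁻¹ =
          -((algebraMap T[X][Y] F (C (f.coeff 0)) * (algebraMap T[X][Y] F (C (f.coeff 1)))⁻¹) *
            ((algebraMap T[X][Y] F Y)⁻¹ * (algebraMap T[X][Y] F f)⁻¹)) := by
        have : algebraMap T[X][Y] F f = algebraMap T[X][Y] F (C (f.coeff 1)) *
            algebraMap T[X][Y] F Y + algebraMap T[X][Y] F (C (f.coeff 0)) := by
          rw [← map_mul, ← map_add, ← eq_X_add_C_of_natDegree_le_one h1.le]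
        field_simp
        rw [this]; ring
      rw [key, Valuation.map_neg]
      have e0 : val T F N (algebraMap T[X][Y] F (C (f.coeff 0))) ≤
          exp ((f.coeff 0).natDegree : ℤ) := by
        by_cases h : f.coeff 0 = 0
        · simp [h]
        · exact (val_C F N h).le
      have e1 : val T F N (algebraMap T[X][Y] F f)⁻¹ ≤ exp (-(N : ℤ)) := by
        rw [map_inv₀, hN, ← exp_neg, exp_le_exp, h1]; push_cast; omega
      refine (val_mul_le F (val_mul_le F e0 (val_le_of_mem (inv_C_mem hc) N))
        (val_mul_le F (val_Y_inv N) e1)).trans (exp_le_exp.2 (by omega))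
  · refine ⟨0, zero_mem _, 0, zero_mem _, 0, ?_⟩
    filter_upwards [eventually_val_eq F f hf] with N hN
    rw [zero_mul, sub_zero, sub_zero, map_inv₀, hN, ← exp_neg, exp_le_exp]
    have : (2 : ℤ) ≤ f.natDegree := by exact_mod_cast h2
    nlinarith [mul_le_mul_of_nonneg_left this (Int.natCast_nonneg N)]

/-- Every element of the reciprocal complement is `a + b / Y + O(Y⁻²)` with `a` and `b` of degree
at most `0` in `X`. The bound on the degree of `b` is what excludes elements such as `X / Y`. -/
lemma exists_hasExpansion {r : F} (hr : r ∈ ReciprocalComplement T[X][Y] F) :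
    ∃ a ∈ coeffRing T F, ∃ b ∈ coeffRing T F, HasExpansion T F r a b := by
  induction hr using Subring.closure_induction with
  | mem r hr =>
    obtain ⟨f, hf, rfl⟩ := hr
    exact exists_hasExpansion_inv hf
  | zero => exact ⟨0, zero_mem _, 0, zero_mem _, hasExpansion_self _⟩
  | one => exact ⟨1, one_mem _, 0, zero_mem _, hasExpansion_self _⟩
  | add r s _ _ hr hs =>
    obtain ⟨a, ha, b, hb, h⟩ := hr
    obtain ⟨a', ha', b', hb', h'⟩ := hs
    exact ⟨_, add_mem ha ha', _, add_mem hb hb', h.add h'⟩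
  | neg r _ hr =>
    obtain ⟨a, ha, b, hb, h⟩ := hr
    exact ⟨_, neg_mem ha, _, neg_mem hb, h.neg⟩
  | mul r s _ _ hr hs =>
    obtain ⟨a, ha, b, hb, h⟩ := hr
    obtain ⟨a', ha', b', hb', h'⟩ := hs
    exact ⟨_, mul_mem ha ha', _, add_mem (mul_mem ha hb') (mul_mem ha' hb),
      h.mul h' ha hb ha' hb'⟩

lemma val_le_one {r : F} (hr : r ∈ ReciprocalComplement T[X][Y] F) (N : ℕ) :
    val T F N r ≤ 1 := by
  suffices h : ReciprocalComplement T[X][Y] F ≤ (val T F N).integer from h hr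
  refine Subring.closure_le.2 ?_
  rintro _ ⟨f, hf, rfl⟩
  rw [SetLike.mem_coe, Valuation.mem_integer_iff, map_inv₀, val_algebraMap F N hf, ← exp_neg,
    ← exp_zero, exp_le_exp]
  omega

/-! ### The conductor of `Y / X` -/

/-- If `t` and `t * Y / X` lie in the reciprocal complement, then `val N t ≤ exp (-N)` for `N` large.
Boundedness of `t * Y / X` alone gives `exp (1 - N)`; this already kills the constant coefficient
`a` of `t`, and then the bound on the coefficient of `Y⁻¹` removes the extra factor. -/
lemma eventually_val_le {t : F} (ht : t ∈ ReciprocalComplement T[X][Y] F)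
    (htu : t * (algebraMap T[X][Y] F Y * (algebraMap T[X][Y] F (C X))⁻¹) ∈
      ReciprocalComplement T[X][Y] F) :
    ∀ᶠ N : ℕ in atTop, val T F N t ≤ exp (-(N : ℤ)) := by
  have hinj : Function.Injective (algebraMap T[X][Y] F) := IsFractionRing.injective _ _
  have hY : algebraMap T[X][Y] F Y ≠ 0 := (map_ne_zero_iff _ hinj).2 X_ne_zero
  have hX : algebraMap T[X][Y] F (C X) ≠ 0 := (map_ne_zero_iff _ hinj).2 (by simp)
  obtain ⟨a, ha, b, hb, D, hD⟩ := exists_hasExpansion ht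
  have ha0 : a = 0 := by
    by_contra hne
    -- `val N a` is independent of `N`, while the estimates below push it down to `exp (1 - N)`.
    have hv : val T F 0 a ≠ 0 := (Valuation.ne_zero_iff _).2 hne
    obtain ⟨N, hN, hN1, hN2⟩ := (hD.and ((eventually_ge_atTop (max 1 D.toNat)).and
      (eventually_gt_atTop (1 - log (val T F 0 a)).toNat))).exists
    have hx : val T F N (algebraMap T[X][Y] F (C X)) ≤ exp 1 := by
      rw [val_C F N X_ne_zero, natDegree_X]; rfl
    have ht1 : val T F N t ≤ exp (1 - N : ℤ) := by
      rw [show t = (t * (algebraMap T[X][Y] F Y * (algebraMap T[X][Y] F (C X))⁻¹)) *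
        (algebraMap T[X][Y] F (C X) * (algebraMap T[X][Y] F Y)⁻¹) by field_simp]
      exact (val_mul_le F (k := 0) (val_le_one htu N) (val_mul_le F hx
        (val_Y_inv N))).trans (exp_le_exp.2 (by omega))
    have hb1 := val_mul_le F (val_le_of_mem hb N) (val_Y_inv (T := T) (F := F) N)
    have : val T F N a ≤ exp (1 - N : ℤ) := by
      rw [show a = (t - b * (algebraMap T[X][Y] F Y)⁻¹) -
        (t - a - b * (algebraMap T[X][Y] F Y)⁻¹) by ring]
      refine Valuation.map_sub_le _ (Valuation.map_sub_le _ ht1 ?_) ?_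
      · exact hb1.trans (exp_le_exp.2 (by omega))
      · exact hN.trans (exp_le_exp.2 (by omega))
    rw [val_eq_of_mem ha, ← log_le_iff_le_exp hv] at this
    omega
  subst ha0
  filter_upwards [hD, eventually_ge_atTop (max 1 D.toNat)] with N h1 hN
  rw [show t = b * (algebraMap T[X][Y] F Y)⁻¹ +
    (t - 0 - b * (algebraMap T[X][Y] F Y)⁻¹) by ring]
  refine Valuation.map_add_le _ ?_ (h1.trans (exp_le_exp.2 (by omega)))
  exact (val_mul_le F (val_le_of_mem hb N) (val_Y_inv N)).trans
    (exp_le_exp.2 (by omega))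

lemma inv_mem {A F : Type*} [CommRing A] [Field F] [Algebra A F] {f : A} (hf : f ≠ 0) :
    (algebraMap A F f)⁻¹ ∈ ReciprocalComplement A F :=
  Subring.subset_closure ⟨f, hf, rfl⟩

variable (T F)

/-- The conductor `J = {t | t * Y / X ∈ R}` is not finitely generated. Finitely many generators, and
with them all of `J`, satisfy `val N t ≤ exp (-N)` for a suitable `N`, but `J` contains
`1 / (X ^ (N - 1) * (Y + X ^ N))`, of value `exp (1 - N)`. -/
theorem conductor_not_fg (J : Ideal (ReciprocalComplement T[X][Y] F))
    (hJ : ∀ t, t ∈ J ↔ (t : F) * (algebraMap T[X][Y] F Y * (algebraMap T[X][Y] F (C X))⁻¹) ∈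
      ReciprocalComplement T[X][Y] F) : ¬ J.FG := by
  rintro ⟨G, hG⟩
  have hinj : Function.Injective (algebraMap T[X][Y] F) := IsFractionRing.injective _ _
  have hX : algebraMap T[X][Y] F (C X) ≠ 0 := (map_ne_zero_iff _ hinj).2 (by simp)
  have hev : ∀ᶠ N : ℕ in atTop, ∀ t ∈ G, val T F N (t : F) ≤ exp (-(N : ℤ)) := by
    rw [Filter.eventually_all_finset]
    intro t ht
    exact eventually_val_le t.2 ((hJ t).1 (hG ▸ Ideal.subset_span ht))
  obtain ⟨N, hN, hN1⟩ := (hev.and (eventually_ge_atTop 1)).exists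
  have hall : ∀ t ∈ J, val T F N (t : F) ≤ exp (-(N : ℤ)) := by
    intro t ht
    rw [← hG] at ht
    induction ht using Submodule.span_induction with
    | mem t ht => exact hN t ht
    | zero => simp
    | add s t _ _ hs ht => exact Valuation.map_add_le _ hs ht
    | smul r t _ ht =>
      have := val_mul_le F (k := 0) (val_le_one r.2 N) ht
      rwa [zero_add] at this
  have h0 : (Y + C X ^ N : T[X][Y]) ≠ 0 := by
    rw [← C_pow]; exact X_add_C_ne_zero _
  have h0F : algebraMap T[X][Y] F (Y + C X ^ N) ≠ 0 := (map_ne_zero_iff _ hinj).2 h0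
  have hxm : (algebraMap T[X][Y] F (C X))⁻¹ ∈ ReciprocalComplement T[X][Y] F :=
    inv_mem (by simp)
  have hs : (algebraMap T[X][Y] F (C X))⁻¹ ^ (N - 1) * (algebraMap T[X][Y] F (Y + C X ^ N))⁻¹ ∈
      ReciprocalComplement T[X][Y] F := mul_mem (pow_mem hxm _) (inv_mem h0)
  -- The witness lies in `J` because its product with `Y / X` is `X⁻¹ ^ N - 1 / (Y + X ^ N)`.
  have := hall ⟨_, hs⟩ ((hJ _).2 ?_)
  · obtain ⟨M, rfl⟩ := Nat.exists_eq_add_of_le' hN1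
    rw [map_mul, map_inv₀ _ (algebraMap T[X][Y] F (Y + _)), val_Y_add, inv_one, mul_one, map_pow,
      map_inv₀, val_C F _ X_ne_zero, natDegree_X, ← exp_neg, ← exp_nsmul, exp_le_exp] at this
    simp at this
  · have : (algebraMap T[X][Y] F (C X))⁻¹ ^ (N - 1) * (algebraMap T[X][Y] F (Y + C X ^ N))⁻¹ *
        (algebraMap T[X][Y] F Y * (algebraMap T[X][Y] F (C X))⁻¹) =
        (algebraMap T[X][Y] F (C X))⁻¹ ^ N - (algebraMap T[X][Y] F (Y + C X ^ N))⁻¹ := by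
      obtain ⟨M, rfl⟩ := Nat.exists_eq_add_of_le' hN1
      simp only [map_add, map_pow, Nat.add_sub_cancel, inv_pow] at h0F ⊢
      field_simp
      ring
    change _ * _ ∈ _
    rw [this]
    exact sub_mem (pow_mem hxm _) (inv_mem h0)

/-- The ideal `(1 / X, 1 / Y)` is not finitely presented: the first coordinates of the relations
between its two generators form the conductor of `Y / X`. -/
theorem exists_fg_not_finitePresentation : ∃ I : Ideal (ReciprocalComplement T[X][Y] F),
    I.FG ∧ ¬ Module.FinitePresentation (ReciprocalComplement T[X][Y] F) I := by
  have hinj : Function.Injective (algebraMap T[X][Y] F) := IsFractionRing.injective _ _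
  have hX : algebraMap T[X][Y] F (C X) ≠ 0 := (map_ne_zero_iff _ hinj).2 (by simp)
  have hY : algebraMap T[X][Y] F Y ≠ 0 := (map_ne_zero_iff _ hinj).2 X_ne_zero
  let R := ReciprocalComplement T[X][Y] F
  let α : R := ⟨(algebraMap T[X][Y] F (C X))⁻¹, inv_mem (by simp)⟩
  let β : R := ⟨(algebraMap T[X][Y] F Y)⁻¹, inv_mem X_ne_zero⟩
  refine ⟨Ideal.span {α, β}, Submodule.fg_span (Set.toFinite _), fun hfp => ?_⟩
  let l₀ : R × R →ₗ[R] R :=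
    (LinearMap.toSpanSingleton R R α).coprod (LinearMap.toSpanSingleton R R β)
  have hl₀ : ∀ p, l₀ p = p.1 * α + p.2 * β := fun p => rfl
  let l : R × R →ₗ[R] Ideal.span {α, β} :=
    l₀.codRestrict _ fun p => Ideal.mem_span_pair.2 ⟨p.1, p.2, (hl₀ p).symm⟩
  have hl : Function.Surjective l := by
    rintro ⟨z, hz⟩
    obtain ⟨p, q, h⟩ := Ideal.mem_span_pair.1 hz
    exact ⟨(p, q), Subtype.ext h⟩
  refine conductor_not_fg T F _ ?_
    ((Module.FinitePresentation.fg_ker l hl).map (LinearMap.fst R R R))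
  intro t
  rw [Submodule.mem_map]
  constructor
  · rintro ⟨⟨t', s⟩, hp, rfl⟩
    have h1 : t' * α + s * β = 0 := congrArg Subtype.val (LinearMap.mem_ker.1 hp)
    have h2 : (t' : F) * (algebraMap T[X][Y] F (C X))⁻¹ + s * (algebraMap T[X][Y] F Y)⁻¹ = 0 :=
      congrArg Subtype.val h1
    have h3 : (t' : F) * (algebraMap T[X][Y] F Y * (algebraMap T[X][Y] F (C X))⁻¹) = -s := by
      field_simp at h2 ⊢
      linear_combination h2
    change (t' : F) * _ ∈ _
    rw [h3]
    exact neg_mem s.2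
  · intro ht
    refine ⟨(t, -⟨_, ht⟩), LinearMap.mem_ker.2 (Subtype.ext (Subtype.ext ?_)), rfl⟩
    change (t : F) * (algebraMap T[X][Y] F (C X))⁻¹ +
      -((t : F) * (algebraMap T[X][Y] F Y * (algebraMap T[X][Y] F (C X))⁻¹)) *
        (algebraMap T[X][Y] F Y)⁻¹ = 0
    field_simp
    ring
variable {T}

/-- Along a ring isomorphism `A ≃ T[X][Y]` the two reciprocal complements are the same subring
of `F`. -/
theorem exists_of_ringEquiv {A : Type*} [CommRing A] (F : Type*) [Field F] [Algebra A F]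
    [IsFractionRing A F] (e : A ≃+* T[X][Y]) :
    ∃ I : Ideal (ReciprocalComplement A F),
      I.FG ∧ ¬ Module.FinitePresentation (ReciprocalComplement A F) I := by
  let _ : Algebra T[X][Y] F := ((algebraMap A F).comp e.symm.toRingHom).toAlgebra
  have : IsFractionRing T[X][Y] F :=
    (IsFractionRing.isFractionRing_iff_of_base_ringEquiv (S := F) (h := e)).1 inferInstance
  have hR : ReciprocalComplement A F = ReciprocalComplement T[X][Y] F := by
    unfold ReciprocalComplement
    congr 1
    ext z
    constructor
    · rintro ⟨f, hf, rfl⟩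
      refine ⟨e f, (map_ne_zero_iff _ e.injective).2 hf, ?_⟩
      change _ = (algebraMap _ F (e.symm (e f)))⁻¹
      rw [e.symm_apply_apply]
    · rintro ⟨f, hf, rfl⟩
      exact ⟨e.symm f, (map_ne_zero_iff _ e.symm.injective).2 hf, rfl⟩
  rw [hR]
  exact exists_fg_not_finitePresentation T F

end val
end RecipCompl

/-- For `n ≥ 2`, the reciprocal complement `R` of `K[X₁, …, Xₙ]` is not coherent: some
finitely generated ideal of `R` is not finitely presented as an `R`-module.  In
particular, `R` is not Noetherian. -/
theorem recip_polynomialRing_not_coherent (K : Type*) [Field K] (n : ℕ) (hn : 2 ≤ n)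
    (F : Type*) [Field F] [Algebra (MvPolynomial (Fin n) K) F]
    [IsFractionRing (MvPolynomial (Fin n) K) F] :
    (∃ I : Ideal (ReciprocalComplement (MvPolynomial (Fin n) K) F),
      I.FG ∧ ¬ Module.FinitePresentation (ReciprocalComplement (MvPolynomial (Fin n) K) F) I)
    ∧ ¬ IsNoetherianRing (ReciprocalComplement (MvPolynomial (Fin n) K) F) := by
  have main : ∃ I : Ideal (ReciprocalComplement (MvPolynomial (Fin n) K) F),
      I.FG ∧ ¬ Module.FinitePresentation (ReciprocalComplement (MvPolynomial (Fin n) K) F) I := by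
    obtain ⟨m, rfl⟩ := Nat.exists_eq_add_of_le' hn
    exact RecipCompl.exists_of_ringEquiv F
      ((MvPolynomial.finSuccEquiv K (m + 1)).toRingEquiv.trans
        (Polynomial.mapEquiv (MvPolynomial.finSuccEquiv K m).toRingEquiv))
  refine ⟨main, fun hN => ?_⟩
  obtain ⟨I, hI, hI'⟩ := main
  have : Module.Finite _ I := Module.Finite.iff_fg.2 hI
  exact hI' (Module.finitePresentation_of_finite _ _)
end

section
/- Let K be a field and n ≥ 2. Then the reciprocal complement R = R(K[X_1, ..., X_n]) is not integrally closed in its fraction field K(X_1, ..., X_n): there exists β ∈ K(X_1, ..., X_n) with β ∉ R such that β is integral over R (indeed some positive power of β lies in R). -/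
namespace RecipNotNormal

open Polynomial LaurentSeries

noncomputable section

/-! ### Expansions in Laurent series -/

/-- The expansion at infinity `k[X] → k⸨t⸩`, `X ↦ t⁻¹`. -/
def expandInf (k : Type*) [Field k] : k[X] →+* k⸨X⸩ :=
  eval₂RingHom HahnSeries.C (HahnSeries.single (-1) 1)

/-- The expansion at zero `k[X] → k⸨t⸩`, `X ↦ t`. -/
def expandZero (k : Type*) [Field k] : k[X] →+* k⸨X⸩ :=
  (HahnSeries.ofPowerSeries ℤ k).comp Polynomial.coeToPowerSeries.ringHom

lemma expandZero_apply {k : Type*} [Field k] (P : k[X]) :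
    expandZero k P = HahnSeries.ofPowerSeries ℤ k (P : PowerSeries k) := rfl

lemma expandInf_X (k : Type*) [Field k] :
    expandInf k X = HahnSeries.single (-1) 1 := by simp [expandInf]

lemma expandInf_C {k : Type*} [Field k] (c : k) :
    expandInf k (C c) = HahnSeries.C c := by simp [expandInf]

/-- The expansion of `P` at infinity is `t ^ (-deg P)` times the power series of its reverse, whose
constant coefficient is the leading coefficient of `P`. -/
lemma expandInf_eq {k : Type*} [Field k] (P : k[X]) :
    expandInf k P = HahnSeries.single (-(P.natDegree : ℤ)) 1 *
      HahnSeries.ofPowerSeries ℤ k (P.reverse : PowerSeries k) := by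
  let _ : Invertible (HahnSeries.single (-1 : ℤ) (1 : k)) :=
    ⟨HahnSeries.single 1 1, by simp, by simp⟩
  have h := eval₂_reverse_mul_pow (HahnSeries.C : k →+* k⸨X⸩) (HahnSeries.single (-1) 1) P
  have h2 : eval₂RingHom (HahnSeries.C : k →+* k⸨X⸩) (HahnSeries.single 1 1) = expandZero k := by
    ext <;> simp [expandZero]
  have h3 : eval₂ (HahnSeries.C : k →+* k⸨X⸩) (HahnSeries.single 1 1) P.reverse
      = HahnSeries.ofPowerSeries ℤ k (P.reverse : PowerSeries k) := by
    rw [← expandZero_apply, ← h2]; rfl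
  change eval₂ _ _ P = _
  rw [← h, mul_comm]
  congr 1
  simp [HahnSeries.single_pow]

lemma constantCoeff_reverse {k : Type*} [Field k] (P : k[X]) :
    PowerSeries.constantCoeff (P.reverse : PowerSeries k) = P.leadingCoeff := by
  rw [← PowerSeries.coeff_zero_eq_constantCoeff_apply, Polynomial.coeff_coe, coeff_zero_reverse]

lemma reverse_coe_ne_zero {k : Type*} [Field k] {P : k[X]} (hP : P ≠ 0) :
    (P.reverse : PowerSeries k) ≠ 0 := by
  intro h
  have := constantCoeff_reverse P
  rw [h] at this
  rw [map_zero] at this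
  exact hP (leadingCoeff_eq_zero.1 this.symm)

lemma expandInf_injective (k : Type*) [Field k] : Function.Injective (expandInf k) := by
  rw [injective_iff_map_eq_zero]
  intro P h
  by_contra hP
  rw [expandInf_eq] at h
  rcases mul_eq_zero.1 h with h | h
  · simp at h
  · exact reverse_coe_ne_zero hP
      (HahnSeries.ofPowerSeries_injective (Γ := ℤ) (by rw [h, map_zero]))

lemma expandZero_injective (k : Type*) [Field k] : Function.Injective (expandZero k) := by
  intro P Q h
  exact Polynomial.coe_injective _ (HahnSeries.ofPowerSeries_injective h)

lemma ofPowerSeries_inv {k : Type*} [Field k] {φ : PowerSeries k}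
    (h : PowerSeries.constantCoeff φ ≠ 0) :
    HahnSeries.ofPowerSeries ℤ k φ⁻¹ = (HahnSeries.ofPowerSeries ℤ k φ)⁻¹ := by
  apply eq_inv_of_mul_eq_one_left
  rw [← map_mul, PowerSeries.inv_mul_cancel _ h, map_one]

lemma coeff_inv_expandInf {k : Type*} [Field k] {P : k[X]} (hP : P ≠ 0) (m : ℤ) :
    ((expandInf k P)⁻¹).coeff m = if m - P.natDegree < 0 then 0 else
      PowerSeries.coeff (m - P.natDegree).natAbs (P.reverse : PowerSeries k)⁻¹ := by
  rw [expandInf_eq, mul_inv, HahnSeries.inv_single, ← ofPowerSeries_inv]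
  · rw [HahnSeries.coeff_single_mul, PowerSeries.coeff_coe]
    simp
  · rw [constantCoeff_reverse]
    exact leadingCoeff_ne_zero.2 hP

/-- If a power series has coefficients in a subring in which its constant coefficient is
invertible, so has its inverse. -/
lemma coeff_inv_mem {E : Type*} [Field E] (B : Subring E) (φ : PowerSeries E)
    (h : ∀ n, PowerSeries.coeff n φ ∈ B) (h0 : (PowerSeries.constantCoeff φ)⁻¹ ∈ B) (n : ℕ) :
    PowerSeries.coeff n φ⁻¹ ∈ B := by
  induction n using Nat.strong_induction_on with
  | _ n ih =>
    rw [PowerSeries.coeff_inv]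
    split_ifs with hn
    · exact h0
    · refine B.mul_mem (B.neg_mem h0) (B.sum_mem fun x _ => ?_)
      split_ifs with hx
      · exact B.mul_mem (h _) (ih _ hx)
      · exact B.zero_mem

/-! ### A residue functional on `k(S)` -/

/-- The expansion of rational functions at infinity. -/
def ratInf (k : Type*) [Field k] : RatFunc k →+* k⸨X⸩ :=
  IsFractionRing.lift (expandInf_injective k)

/-- The expansion of rational functions at zero. -/
def ratZero (k : Type*) [Field k] : RatFunc k →+* k⸨X⸩ :=
  IsFractionRing.lift (expandZero_injective k)

/-- The coefficient of `S⁻¹` in the expansion of `g(S)` at infinity, minus the coefficient of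
`S⁻¹` in its expansion at zero. -/
def residueDiff (k : Type*) [Field k] : RatFunc k →+ k where
  toFun g := (ratInf k g).coeff 1 - (ratZero k g).coeff (-1)
  map_zero' := by simp
  map_add' a b := by simp; ring

section residue

variable {k : Type*} [Field k]

lemma residueDiff_apply (g : RatFunc k) :
    residueDiff k g = (ratInf k g).coeff 1 - (ratZero k g).coeff (-1) := rfl

lemma ratInf_algebraMap (P : k[X]) :
    ratInf k (algebraMap k[X] (RatFunc k) P) = expandInf k P :=
  IsFractionRing.lift_algebraMap _ _

lemma ratZero_algebraMap (P : k[X]) :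
    ratZero k (algebraMap k[X] (RatFunc k) P) = expandZero k P :=
  IsFractionRing.lift_algebraMap _ _

lemma ratInf_C (c : k) : ratInf k (algebraMap k[X] (RatFunc k) (C c)) =
    HahnSeries.ofPowerSeries ℤ k (PowerSeries.C c) := by
  rw [ratInf_algebraMap, expandInf_C, HahnSeries.ofPowerSeries_C]

lemma ratZero_C (c : k) : ratZero k (algebraMap k[X] (RatFunc k) (C c)) =
    HahnSeries.ofPowerSeries ℤ k (PowerSeries.C c) := by
  rw [ratZero_algebraMap, expandZero_apply, Polynomial.coe_C]

lemma ratInf_X : ratInf k (algebraMap k[X] (RatFunc k) X) =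
    (HahnSeries.ofPowerSeries ℤ k PowerSeries.X)⁻¹ := by
  rw [ratInf_algebraMap, expandInf_X, HahnSeries.ofPowerSeries_X, HahnSeries.inv_single, inv_one]

lemma ratZero_X : ratZero k (algebraMap k[X] (RatFunc k) X) =
    HahnSeries.ofPowerSeries ℤ k PowerSeries.X := by
  rw [ratZero_algebraMap, expandZero_apply, Polynomial.coe_X]

lemma ofPowerSeries_X_zpow (z : ℤ) :
    (HahnSeries.ofPowerSeries ℤ k PowerSeries.X) ^ z = HahnSeries.single z 1 := by
  rw [HahnSeries.ofPowerSeries_X]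
  obtain ⟨n, rfl | rfl⟩ := z.eq_nat_or_neg
  · rw [zpow_natCast, HahnSeries.single_pow]; simp
  · rw [zpow_neg, zpow_natCast, HahnSeries.single_pow, HahnSeries.inv_single]; simp

lemma residueDiff_zpow (z : ℤ) :
    residueDiff k ((algebraMap k[X] (RatFunc k) X) ^ z) = 0 := by
  rw [residueDiff_apply, map_zpow₀, map_zpow₀, ratInf_X, ratZero_X, inv_zpow, ← zpow_neg,
    ofPowerSeries_X_zpow, ofPowerSeries_X_zpow, HahnSeries.coeff_single, HahnSeries.coeff_single]
  by_cases h : z = -1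
  · subst h; simp
  · rw [if_neg (by omega), if_neg (by omega), sub_zero]

lemma residueDiff_smul (c : k) (g : RatFunc k) :
    residueDiff k (c • g) = c * residueDiff k g := by
  rw [Algebra.smul_def, IsScalarTower.algebraMap_apply k k[X] (RatFunc k),
    Polynomial.algebraMap_eq, residueDiff_apply, residueDiff_apply, map_mul, map_mul, ratInf_C,
    ratZero_C, HahnSeries.ofPowerSeries_C, HahnSeries.C_mul_eq_smul, HahnSeries.C_mul_eq_smul]
  simp [mul_sub]

variable (k) in
/-- The subring `k[S, S⁻¹]` of `k(S)`. -/
def laurentSub : Subalgebra k (RatFunc k) :=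
  Algebra.adjoin k {algebraMap k[X] (RatFunc k) X, (algebraMap k[X] (RatFunc k) X)⁻¹}

lemma residueDiff_laurentSub {g : RatFunc k} (hg : g ∈ laurentSub k) : residueDiff k g = 0 := by
  have hX : algebraMap k[X] (RatFunc k) X ≠ 0 :=
    (map_ne_zero_iff _ (IsFractionRing.injective k[X] (RatFunc k))).2 X_ne_zero
  rw [laurentSub, ← Subalgebra.mem_toSubmodule, Algebra.adjoin_eq_span] at hg
  induction hg using Submodule.span_induction with
  | mem x hx =>
    have : ∃ z : ℤ, x = (algebraMap k[X] (RatFunc k) X) ^ z := by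
      induction hx using Submonoid.closure_induction with
      | mem x hx =>
        rcases hx with rfl | rfl
        · exact ⟨1, by simp⟩
        · exact ⟨-1, by simp⟩
      | one => exact ⟨0, by simp⟩
      | mul x y _ _ hx hy =>
        obtain ⟨a, rfl⟩ := hx
        obtain ⟨b, rfl⟩ := hy
        exact ⟨a + b, (zpow_add₀ hX a b).symm⟩
    obtain ⟨z, rfl⟩ := this
    exact residueDiff_zpow z
  | zero => simp
  | add x y _ _ hx hy => rw [map_add, hx, hy, add_zero]
  | smul a x _ hx => rw [residueDiff_smul, hx, mul_zero]

lemma algebraMap_mem_laurentSub (P : k[X]) :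
    algebraMap k[X] (RatFunc k) P ∈ laurentSub k := by
  have hX : algebraMap k[X] (RatFunc k) X ∈ laurentSub k :=
    Algebra.subset_adjoin (by simp)
  induction P using Polynomial.induction_on' with
  | add p q hp hq => rw [map_add]; exact add_mem hp hq
  | monomial n a =>
    rw [← C_mul_X_pow_eq_monomial, map_mul, map_pow]
    refine mul_mem ?_ (pow_mem hX n)
    rw [← Polynomial.algebraMap_eq, ← IsScalarTower.algebraMap_apply k k[X] (RatFunc k)]
    exact (laurentSub k).algebraMap_mem a

lemma inv_monomial_mem_laurentSub (c : k) (i : ℕ) :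
    (algebraMap k[X] (RatFunc k) (C c * X ^ i))⁻¹ ∈ laurentSub k := by
  have hX : (algebraMap k[X] (RatFunc k) X)⁻¹ ∈ laurentSub k :=
    Algebra.subset_adjoin (by simp)
  rw [map_mul, map_pow, mul_inv, ← inv_pow]
  refine mul_mem ?_ (pow_mem hX i)
  rw [← Polynomial.algebraMap_eq, ← IsScalarTower.algebraMap_apply k k[X] (RatFunc k), ← map_inv₀]
  exact (laurentSub k).algebraMap_mem _

/-- The exponents of `S` in `eS / (a + bS²)²` are positive in the expansion at zero and at most
`-3` in the one at infinity. -/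
lemma residueDiff_quad {a b : k} (ha : a ≠ 0) (hb : b ≠ 0) (e : k) :
    residueDiff k (algebraMap k[X] (RatFunc k) (C e * X) *
      ((algebraMap k[X] (RatFunc k) (C a + C b * X ^ 2))⁻¹) ^ 2) = 0 := by
  have h1 : PowerSeries.constantCoeff (PowerSeries.C a + PowerSeries.C b * PowerSeries.X ^ 2) ≠ 0 := by
    simpa using ha
  have h2 : PowerSeries.constantCoeff (PowerSeries.C a * PowerSeries.X ^ 2 + PowerSeries.C b) ≠ 0 := by
    simpa using hb
  have hs : HahnSeries.ofPowerSeries ℤ k PowerSeries.X ≠ 0 := by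
    rw [HahnSeries.ofPowerSeries_X]; simp
  have h2' : HahnSeries.ofPowerSeries ℤ k
      (PowerSeries.C a * PowerSeries.X ^ 2 + PowerSeries.C b) ≠ 0 := by
    intro h
    rw [HahnSeries.ofPowerSeries_injective (Γ := ℤ) (h.trans (map_zero _).symm)] at h2
    simp at h2
  have hz : ratZero k (algebraMap k[X] (RatFunc k) (C e * X) *
      ((algebraMap k[X] (RatFunc k) (C a + C b * X ^ 2))⁻¹) ^ 2) =
      HahnSeries.ofPowerSeries ℤ k (PowerSeries.C e * PowerSeries.X *
        ((PowerSeries.C a + PowerSeries.C b * PowerSeries.X ^ 2)⁻¹) ^ 2) := by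
    simp only [map_mul, map_pow, map_add, map_inv₀, ratZero_C, ratZero_X, ofPowerSeries_inv h1]
  have hi : ratInf k (algebraMap k[X] (RatFunc k) (C e * X) *
      ((algebraMap k[X] (RatFunc k) (C a + C b * X ^ 2))⁻¹) ^ 2) =
      HahnSeries.ofPowerSeries ℤ k (PowerSeries.C e * PowerSeries.X ^ 3 *
        ((PowerSeries.C a * PowerSeries.X ^ 2 + PowerSeries.C b)⁻¹) ^ 2) := by
    simp only [map_mul, map_pow, map_add] at h2'
    simp only [map_mul, map_pow, map_add, map_inv₀, ratInf_C, ratInf_X, ofPowerSeries_inv h2]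
    have h3 : HahnSeries.ofPowerSeries ℤ k (PowerSeries.C a) +
        HahnSeries.ofPowerSeries ℤ k (PowerSeries.C b) *
          (HahnSeries.ofPowerSeries ℤ k PowerSeries.X)⁻¹ ^ 2 =
        (HahnSeries.ofPowerSeries ℤ k (PowerSeries.C a) *
          HahnSeries.ofPowerSeries ℤ k PowerSeries.X ^ 2 +
          HahnSeries.ofPowerSeries ℤ k (PowerSeries.C b)) *
          ((HahnSeries.ofPowerSeries ℤ k PowerSeries.X)⁻¹) ^ 2 := by
      field_simp
    rw [h3]
    field_simp
  rw [residueDiff_apply, hz, hi, PowerSeries.coeff_coe, PowerSeries.coeff_coe]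
  have : PowerSeries.C e * PowerSeries.X ^ 3 *
        ((PowerSeries.C a * PowerSeries.X ^ 2 + PowerSeries.C b)⁻¹) ^ 2 =
      PowerSeries.X ^ 3 * (PowerSeries.C e *
        ((PowerSeries.C a * PowerSeries.X ^ 2 + PowerSeries.C b)⁻¹) ^ 2) := by ring
  rw [this]
  simp [PowerSeries.coeff_X_pow_mul']

lemma residueDiff_target :
    residueDiff k (algebraMap k[X] (RatFunc k) X *
      (algebraMap k[X] (RatFunc k) (X ^ 2 + 1))⁻¹) = 1 := by
  have h1 : PowerSeries.constantCoeff (PowerSeries.X ^ 2 + 1 : PowerSeries k) ≠ 0 := by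
    simp
  have hs : HahnSeries.ofPowerSeries ℤ k PowerSeries.X ≠ 0 := by
    rw [HahnSeries.ofPowerSeries_X]; simp
  have h2' : HahnSeries.ofPowerSeries ℤ k (PowerSeries.X ^ 2 + 1) ≠ 0 := by
    intro h
    rw [HahnSeries.ofPowerSeries_injective (Γ := ℤ) (h.trans (map_zero _).symm)] at h1
    simp at h1
  have hz : ratZero k (algebraMap k[X] (RatFunc k) X *
      (algebraMap k[X] (RatFunc k) (X ^ 2 + 1))⁻¹) =
      HahnSeries.ofPowerSeries ℤ k (PowerSeries.X * (PowerSeries.X ^ 2 + 1)⁻¹) := by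
    simp only [map_mul, map_pow, map_add, map_one, map_inv₀, ratZero_X, ofPowerSeries_inv h1]
  have hi : ratInf k (algebraMap k[X] (RatFunc k) X *
      (algebraMap k[X] (RatFunc k) (X ^ 2 + 1))⁻¹) =
      HahnSeries.ofPowerSeries ℤ k (PowerSeries.X * (PowerSeries.X ^ 2 + 1)⁻¹) := by
    simp only [map_pow, map_add, map_one] at h2'
    simp only [map_mul, map_pow, map_add, map_one, map_inv₀, ratInf_X, ofPowerSeries_inv h1]
    have h3 : (HahnSeries.ofPowerSeries ℤ k PowerSeries.X)⁻¹ ^ 2 + 1 =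
        (HahnSeries.ofPowerSeries ℤ k PowerSeries.X ^ 2 + 1) *
          ((HahnSeries.ofPowerSeries ℤ k PowerSeries.X)⁻¹) ^ 2 := by
      field_simp
      ring
    rw [h3]
    field_simp
  rw [residueDiff_apply, hz, hi, PowerSeries.coeff_coe, PowerSeries.coeff_coe]
  simp

/-! ### The weighted homogenization -/

variable (k) in
/-- The weighted homogenization of a polynomial in two variables `x` (the inner variable, of
weight `3`) and `y` (the outer variable, of weight `2`): the ring homomorphism
`k[x][y] → k[S][T]`, `x ↦ S T ^ 3`, `y ↦ T ^ 2`. -/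
def weighted : k[X][X] →+* k[X][X] :=
  eval₂RingHom (eval₂RingHom (C.comp C) (C X * X ^ 3)) (X ^ 2)

lemma weighted_X : weighted k X = X ^ 2 := by simp [weighted]

lemma weighted_C_X : weighted k (C X) = C X * X ^ 3 := by simp [weighted]

lemma weighted_monomial (i j : ℕ) (c : k) :
    weighted k (monomial j (monomial i c)) = monomial (3 * i + 2 * j) (monomial i c) := by
  simp only [weighted, coe_eval₂RingHom, eval₂_monomial, RingHom.comp_apply, mul_pow, ← pow_mul]
  rw [← C_mul_X_pow_eq_monomial, ← C_mul_X_pow_eq_monomial, C_mul, C_pow, pow_add]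
  ring

lemma coeff_weighted (p : k[X][X]) (n i : ℕ) :
    ((weighted k p).coeff n).coeff i =
      if 3 * i ≤ n ∧ 2 ∣ n - 3 * i then (p.coeff ((n - 3 * i) / 2)).coeff i else 0 := by
  induction p using Polynomial.induction_on' with
  | add p q hp hq =>
    rw [map_add, coeff_add, coeff_add, hp, hq]
    split_ifs <;> simp
  | monomial j q =>
    induction q using Polynomial.induction_on' with
    | add p q hp hq =>
      rw [map_add, map_add, coeff_add, coeff_add, hp, hq]
      split_ifs <;> simp
    | monomial i' c =>
      rw [weighted_monomial]
      simp only [coeff_monomial, apply_ite (fun q : k[X] => q.coeff i), coeff_zero]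
      split_ifs <;> first | rfl | omega

lemma weighted_injective : Function.Injective (weighted k) := by
  rw [injective_iff_map_eq_zero]
  intro p hp
  ext j i
  have h := coeff_weighted p (3 * i + 2 * j) i
  rw [hp, if_pos ⟨by omega, by omega⟩] at h
  rw [show (3 * i + 2 * j - 3 * i) / 2 = j by omega] at h
  simpa using h.symm

lemma coeff_weighted_eq_zero (p : k[X][X]) {n i : ℕ} (h : ¬ (3 * i ≤ n ∧ 2 ∣ n - 3 * i)) :
    ((weighted k p).coeff n).coeff i = 0 := by
  rw [coeff_weighted, if_neg h]

/-- In weighted degree at most `7`, every weighted homogeneous form is a monomial, except in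
degree `6`, where `x²` and `y³` can both occur. -/
lemma coeff_weighted_form (p : k[X][X]) {d : ℕ} (hd : d ≤ 7) :
    (∃ c i, (weighted k p).coeff d = C c * X ^ i) ∨
      (d = 6 ∧ ∃ a b, a ≠ 0 ∧ b ≠ 0 ∧ (weighted k p).coeff d = C a + C b * X ^ 2) := by
  by_cases h6 : d = 6
  · subst h6
    have key : (weighted k p).coeff 6 =
        C (((weighted k p).coeff 6).coeff 0) + C (((weighted k p).coeff 6).coeff 2) * X ^ 2 := by
      ext i
      simp only [coeff_add, coeff_C, coeff_C_mul, coeff_X_pow]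
      by_cases h0 : i = 0
      · subst h0; simp
      by_cases h2 : i = 2
      · subst h2; simp
      rw [coeff_weighted_eq_zero p (by omega)]
      simp [h0, h2]
    by_cases ha : ((weighted k p).coeff 6).coeff 0 = 0
    · rw [ha, C_0, zero_add] at key
      exact Or.inl ⟨_, _, key⟩
    by_cases hb : ((weighted k p).coeff 6).coeff 2 = 0
    · rw [hb, C_0, zero_mul, add_zero] at key
      exact Or.inl ⟨_, 0, by rw [pow_zero, mul_one]; exact key⟩
    exact Or.inr ⟨rfl, _, _, ha, hb, key⟩
  · left
    -- the only possible exponent of `S` in degree `d` is the parity of `d`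
    refine ⟨((weighted k p).coeff d).coeff (d % 2), d % 2, ?_⟩
    ext i
    simp only [coeff_C_mul, coeff_X_pow]
    by_cases hi : i = d % 2
    · subst hi; simp
    · rw [coeff_weighted_eq_zero p (by omega)]
      simp [hi]

variable (k) in
/-- The embedding `k[x][y] → k(S)⸨t⸩`, `x ↦ S t⁻³`, `y ↦ t⁻²`. -/
def embed : k[X][X] →+* (RatFunc k)⸨X⸩ :=
  ((expandInf (RatFunc k)).comp (mapRingHom (algebraMap k[X] (RatFunc k)))).comp (weighted k)

lemma embed_apply (p : k[X][X]) :
    embed k p = expandInf (RatFunc k) ((weighted k p).map (algebraMap k[X] (RatFunc k))) := rfl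

lemma embed_injective : Function.Injective (embed k) := by
  refine ((expandInf_injective _).comp ?_).comp weighted_injective
  exact Polynomial.map_injective _ (IsFractionRing.injective k[X] (RatFunc k))

/-- The reciprocal of a nonzero polynomial passes the test that `x / (y² (x² + y³))`, with
coefficient `S / (S² + 1)` at `t⁷`, fails. -/
lemma residueDiff_coeff_inv {p : k[X][X]} (hp : p ≠ 0) :
    residueDiff k (((embed k p)⁻¹).coeff 7) = 0 := by
  have hinj := IsFractionRing.injective k[X] (RatFunc k)
  have hw : weighted k p ≠ 0 := fun h => hp (weighted_injective (by rw [h, map_zero]))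
  have hP : (weighted k p).map (algebraMap k[X] (RatFunc k)) ≠ 0 :=
    (Polynomial.map_ne_zero_iff hinj).2 hw
  rw [embed_apply, coeff_inv_expandInf hP, natDegree_map_eq_of_injective hinj]
  split_ifs with h7
  · simp
  have hd : (weighted k p).natDegree ≤ 7 := by omega
  have hlead : PowerSeries.constantCoeff
      (((weighted k p).map (algebraMap k[X] (RatFunc k))).reverse : PowerSeries (RatFunc k)) =
      algebraMap k[X] (RatFunc k) ((weighted k p).coeff (weighted k p).natDegree) := by
    rw [constantCoeff_reverse, leadingCoeff, natDegree_map_eq_of_injective hinj, coeff_map]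
  rcases coeff_weighted_form p hd with ⟨c, i, h⟩ | ⟨h6, a, b, ha, hb, h⟩
  · apply residueDiff_laurentSub
    refine coeff_inv_mem (laurentSub k).toSubring _ (fun n => ?_) ?_ _
    · rw [Polynomial.coeff_coe, coeff_reverse, coeff_map]
      exact algebraMap_mem_laurentSub _
    · rw [hlead, h]
      exact inv_monomial_mem_laurentSub c i
  · obtain ⟨c, hc⟩ : ∃ c, (weighted k p).coeff 5 = C c * X := by
      refine ⟨((weighted k p).coeff 5).coeff 1, ?_⟩
      ext i
      rw [coeff_C_mul, coeff_X]
      by_cases hi : 1 = i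
      · subst hi; simp
      · rw [coeff_weighted_eq_zero p (by omega)]; simp [hi]
    have h1 : PowerSeries.coeff 1 (((weighted k p).map
        (algebraMap k[X] (RatFunc k))).reverse : PowerSeries (RatFunc k)) =
        algebraMap k[X] (RatFunc k) (C c * X) := by
      rw [Polynomial.coeff_coe, coeff_reverse, natDegree_map_eq_of_injective hinj, h6, coeff_map,
        revAt_le (by omega), hc]
    rw [h] at hlead
    rw [h6]
    have hn : ((7 : ℤ) - (6 : ℕ)).natAbs = 1 := by norm_num
    rw [hn, PowerSeries.coeff_inv, if_neg one_ne_zero]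
    have hanti : Finset.HasAntidiagonal.antidiagonal 1 = {((0 : ℕ), (1 : ℕ)), (1, 0)} := rfl
    rw [hanti, Finset.sum_pair (by simp)]
    simp only [lt_irrefl, if_false, zero_add, zero_lt_one, if_true, h1, hlead,
      PowerSeries.coeff_zero_eq_constantCoeff_apply, PowerSeries.constantCoeff_inv]
    rw [← residueDiff_quad ha hb (-c)]
    congr 1
    rw [C_neg, neg_mul (C c), map_neg (algebraMap k[X] (RatFunc k))]
    ring

end residue

/-! ### The ring of reciprocals -/

section recip

variable {D F : Type*} [CommRing D] [IsDomain D] [Field F] [Algebra D F]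

/-- Products of reciprocals are reciprocals, so an additive map that kills all reciprocals kills
the whole reciprocal complement. -/
lemma map_recip_eq_zero {A : Type*} [AddCommGroup A] (μ : F →+ A)
    (h : ∀ f : D, f ≠ 0 → μ (algebraMap D F f)⁻¹ = 0) {x : F}
    (hx : x ∈ ReciprocalComplement D F) : μ x = 0 := by
  rw [ReciprocalComplement, Subring.mem_closure_iff] at hx
  induction hx using AddSubgroup.closure_induction with
  | mem x hx =>
    have : ∃ f : D, f ≠ 0 ∧ x = (algebraMap D F f)⁻¹ := by
      induction hx using Submonoid.closure_induction with
      | mem x hx => exact hx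
      | one => exact ⟨1, one_ne_zero, by simp⟩
      | mul x y _ _ hx hy =>
        obtain ⟨f, hf, rfl⟩ := hx
        obtain ⟨g, hg, rfl⟩ := hy
        exact ⟨f * g, mul_ne_zero hf hg, by rw [map_mul, mul_inv]⟩
    obtain ⟨f, hf, rfl⟩ := this
    exact h f hf
  | zero => simp
  | add x y _ _ hx hy => rw [map_add, hx, hy, add_zero]
  | neg x _ hx => rw [map_neg, hx, neg_zero]

/-- The theorem for any domain `D` embedded in some `k[x][y]` with image containing `x` and
`y`. -/
theorem not_integrallyClosed_of_embedding [IsFractionRing D F] {k : Type*} [Field k] (h : D →+* k[X][X])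
    (hinj : Function.Injective h) (x y : D) (hx : h x = C X) (hy : h y = X) :
    ∃ β : F, β ∉ ReciprocalComplement D F ∧ IsIntegral (ReciprocalComplement D F) β ∧
      ∃ m : ℕ, 0 < m ∧ β ^ m ∈ ReciprocalComplement D F := by
  have hΨ : Function.Injective ((embed k).comp h) := embed_injective.comp hinj
  let Φ : F →+* (RatFunc k)⸨X⸩ := IsFractionRing.lift hΨ
  have hΦ (f : D) : Φ (algebraMap D F f) = embed k (h f) := IsFractionRing.lift_algebraMap hΨ f
  have hFinj := IsFractionRing.injective D F
  have hy0 : y ≠ 0 := by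
    rintro rfl
    rw [map_zero] at hy
    exact X_ne_zero hy.symm
  have hf0 : x ^ 2 + y ^ 3 ≠ 0 := by
    intro h0
    have h1 := congrArg h h0
    rw [map_add, map_pow, map_pow, hx, hy, map_zero, ← C_pow] at h1
    have h2 := congrArg (fun q => coeff q 3) h1
    rw [coeff_add, coeff_C_of_ne_zero (by norm_num), coeff_X_pow_self, coeff_zero, zero_add] at h2
    exact one_ne_zero h2
  have hy0' : algebraMap D F y ≠ 0 := (map_ne_zero_iff _ hFinj).2 hy0
  have hf0' : algebraMap D F x ^ 2 + algebraMap D F y ^ 3 ≠ 0 := by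
    rw [← map_pow, ← map_pow, ← map_add]
    exact (map_ne_zero_iff _ hFinj).2 hf0
  set β : F := algebraMap D F x *
    (algebraMap D F y ^ 2 * (algebraMap D F x ^ 2 + algebraMap D F y ^ 3))⁻¹ with hβ
  have hmem (f : D) (hf : f ≠ 0) : (algebraMap D F f)⁻¹ ∈ ReciprocalComplement D F :=
    Subring.subset_closure ⟨f, hf, rfl⟩
  have hsq : β ^ 2 ∈ ReciprocalComplement D F := by
    have : β ^ 2 = (algebraMap D F (y ^ 4 * (x ^ 2 + y ^ 3)))⁻¹ -
        (algebraMap D F (y * (x ^ 2 + y ^ 3) ^ 2))⁻¹ := by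
      rw [hβ]
      simp only [map_mul, map_pow, map_add]
      field_simp
      ring
    rw [this]
    exact sub_mem (hmem _ (mul_ne_zero (pow_ne_zero _ hy0) hf0))
      (hmem _ (mul_ne_zero hy0 (pow_ne_zero _ hf0)))
  refine ⟨β, fun hR => ?_, ?_, 2, two_pos, hsq⟩
  · let μ : F →+ k := (residueDiff k).comp
      { toFun := fun g => (Φ g).coeff 7, map_zero' := by simp, map_add' := by simp }
    have hμ (g : F) : μ g = residueDiff k ((Φ g).coeff 7) := rfl
    have h0 : μ β = 0 := by
      refine map_recip_eq_zero μ (fun f hf => ?_) hR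
      rw [hμ, map_inv₀, hΦ]
      exact residueDiff_coeff_inv ((map_ne_zero_iff h hinj).2 hf)
    have hex : embed k (C X) = HahnSeries.single (-3) (algebraMap k[X] (RatFunc k) X) := by
      rw [embed_apply, weighted_C_X]
      simp only [Polynomial.map_mul, Polynomial.map_C, Polynomial.map_pow, Polynomial.map_X,
        map_mul, map_pow, expandInf_C, expandInf_X, HahnSeries.single_pow, HahnSeries.C_apply,
        HahnSeries.single_mul_single]
      simp
    have hey : embed k X = HahnSeries.single (-2) 1 := by
      rw [embed_apply, weighted_X]
      simp [expandInf_X, HahnSeries.single_pow]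
    have hval : Φ β = HahnSeries.single 7 (algebraMap k[X] (RatFunc k) X *
        (algebraMap k[X] (RatFunc k) (X ^ 2 + 1))⁻¹) := by
      rw [hβ]
      simp only [map_mul, map_inv₀, map_add, map_pow, hΦ, hx, hy, hex, hey, HahnSeries.single_pow,
        one_pow]
      norm_num
      rw [← HahnSeries.single_add, HahnSeries.inv_single, HahnSeries.single_mul_single,
        HahnSeries.single_mul_single]
      norm_num
    rw [hμ, hval, HahnSeries.coeff_single_same, residueDiff_target] at h0
    exact one_ne_zero h0
  · exact IsIntegral.of_pow two_pos
      (isIntegral_algebraMap (R := ReciprocalComplement D F) (x := ⟨β ^ 2, hsq⟩))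

end recip

end

end RecipNotNormal

/-- For `n ≥ 2`, the reciprocal complement `R` of `K[X₁, …, Xₙ]` is not integrally closed
in its fraction field `F = K(X₁, …, Xₙ)`: there is `β ∈ F` with `β ∉ R` which is integral
over `R` (indeed some positive power of `β` lies in `R`). -/
theorem recip_polynomialRing_not_integrallyClosed (K : Type*) [Field K] (n : ℕ) (hn : 2 ≤ n)
    (F : Type*) [Field F] [Algebra (MvPolynomial (Fin n) K) F]
    [IsFractionRing (MvPolynomial (Fin n) K) F] :
    ∃ β : F, β ∉ ReciprocalComplement (MvPolynomial (Fin n) K) F ∧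
      IsIntegral (ReciprocalComplement (MvPolynomial (Fin n) K) F) β ∧
      ∃ k : ℕ, 0 < k ∧ β ^ k ∈ ReciprocalComplement (MvPolynomial (Fin n) K) F := by
  obtain ⟨m, rfl⟩ := Nat.exists_eq_add_of_le' hn
  -- the first two variables become `y` and `x`, the others are absorbed into the coefficients
  let e₁ := (MvPolynomial.finSuccEquiv K (m + 1)).toRingEquiv
  let e₂ := Polynomial.mapEquiv (MvPolynomial.finSuccEquiv K m).toRingEquiv
  let ι := algebraMap (MvPolynomial (Fin m) K) (FractionRing (MvPolynomial (Fin m) K))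
  have hι : Function.Injective ι := IsFractionRing.injective _ _
  let h := ((Polynomial.mapRingHom (Polynomial.mapRingHom ι)).comp e₂.toRingHom).comp e₁.toRingHom
  have hinj : Function.Injective h :=
    ((Polynomial.map_injective _ (Polynomial.map_injective _ hι)).comp e₂.injective).comp
      e₁.injective
  refine RecipNotNormal.not_integrallyClosed_of_embedding h hinj (.X (Fin.succ 0)) (.X 0) ?_ ?_
  · change Polynomial.map (Polynomial.mapRingHom ι)
      (Polynomial.map (MvPolynomial.finSuccEquiv K m).toRingEquiv.toRingHom
        (MvPolynomial.finSuccEquiv K (m + 1) (.X (Fin.succ 0)))) = _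
    rw [MvPolynomial.finSuccEquiv_X_succ, Polynomial.map_C, Polynomial.map_C]
    congr 1
    change Polynomial.map ι (MvPolynomial.finSuccEquiv K m (.X 0)) = _
    rw [MvPolynomial.finSuccEquiv_X_zero, Polynomial.map_X]
  · change Polynomial.map (Polynomial.mapRingHom ι)
      (Polynomial.map (MvPolynomial.finSuccEquiv K m).toRingEquiv.toRingHom
        (MvPolynomial.finSuccEquiv K (m + 1) (.X 0))) = _
    rw [MvPolynomial.finSuccEquiv_X_zero, Polynomial.map_X, Polynomial.map_X]
end

section
/- Let K be a field and n ≥ 2, and let R = R(K[X_1, ..., X_n]) be the reciprocal complement of the polynomial ring. Then for every integer i with 1 ≤ i ≤ n−1, the set of prime ideals of R of height i is infinite. -/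
/-! ### Dimension and transcendence degree -/

open Polynomial in
/-- Elements `x k ∈ q (k + 1) \ q k` picked along a chain of primes satisfy no nontrivial polynomial
relation over `K`, even modulo the smallest prime `q 0`. Viewed as a polynomial in `x 0`, a relation
modulo `q 0` can be divided by powers of `x 0 ∉ q 0`; its constant term is then a relation among the
remaining elements modulo `q 1 ∋ x 0`. -/
lemma aeval_notMem_of_chain {K A : Type*} [Field K] [CommRing A] [Algebra K A] :
    ∀ (m : ℕ) (q : Fin (m + 1) → PrimeSpectrum A) (x : Fin m → A), StrictMono q →
      (∀ k, x k ∈ (q k.succ).asIdeal) → (∀ k, x k ∉ (q k.castSucc).asIdeal) →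
      ∀ Q : MvPolynomial (Fin m) K, Q ≠ 0 → MvPolynomial.aeval x Q ∉ (q 0).asIdeal := by
  intro m
  induction m with
  | zero =>
    intro q x _ _ _ Q hQ
    obtain ⟨c, rfl⟩ := MvPolynomial.C_surjective (Fin 0) Q
    have hc : c ≠ 0 := by rintro rfl; simp at hQ
    rw [MvPolynomial.aeval_C]
    intro h
    exact (q 0).2.ne_top (Ideal.eq_top_of_isUnit_mem _ h ((IsUnit.mk0 c hc).map _))
  | succ m ih =>
    intro q x hq hx hx' Q hQ
    have tail := ih (fun k => q k.succ) (fun k => x k.succ)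
      (hq.comp (Fin.strictMono_succ)) (fun k => hx k.succ)
      (fun k => by simpa using hx' k.succ)
    let E : (MvPolynomial (Fin m) K)[X] →+* A :=
      Polynomial.eval₂RingHom (MvPolynomial.aeval (fun k : Fin m => x k.succ)).toRingHom (x 0)
    have key : ∀ P : (MvPolynomial (Fin m) K)[X], P ≠ 0 → E P ∉ (q 0).asIdeal := by
      intro P
      induction P using Polynomial.recOnHorner with
      | M0 => simp
      | MC p a hp ha _ =>
        intro _ hmem
        obtain ⟨p', rfl⟩ := Polynomial.X_dvd_iff.mpr hp
        have hle : (q 0).asIdeal ≤ (q 1).asIdeal := hq.monotone (Fin.zero_le 1)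
        have h0 : x 0 ∈ (q 1).asIdeal := by simpa using hx 0
        have h1 := hle hmem
        rw [map_add, map_mul] at h1
        have h2 : E X * E p' ∈ (q 1).asIdeal := Ideal.mul_mem_right _ _ (by simpa [E] using h0)
        have h3 := (Ideal.add_mem_iff_right _ h2).mp h1
        refine tail a ha ?_
        simpa [E] using h3
      | MX p hp h =>
        intro _ hmem
        rw [map_mul] at hmem
        rcases (q 0).2.mem_or_mem hmem with h' | h'
        · exact h hp h'
        · exact hx' 0 (by simpa [E] using h')
    have := key (MvPolynomial.finSuccEquiv K m Q) (by simpa using hQ)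
    have hE : E (MvPolynomial.finSuccEquiv K m Q) = MvPolynomial.aeval x Q := by
      have : (E.comp (MvPolynomial.finSuccEquiv K m).toRingEquiv.toRingHom) =
          (MvPolynomial.aeval x).toRingHom := by
        apply MvPolynomial.ringHom_ext
        · intro r; simp [E, MvPolynomial.finSuccEquiv_apply]
        · intro k
          refine Fin.cases ?_ (fun k => ?_) k <;> simp [E, MvPolynomial.finSuccEquiv_apply]
      exact DFunLike.congr_fun this Q
    rwa [hE] at this

/-- The Krull dimension of an algebra over a field is at most its transcendence degree. -/
lemma krullDim_le_of_trdeg {K A : Type*} [Field K] [CommRing A] [Algebra K A] (n : ℕ)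
    (h : Algebra.trdeg K A ≤ n) : Order.krullDim (PrimeSpectrum A) ≤ n := by
  refine iSup_le fun l => ?_
  have hex : ∀ k : Fin l.length, ∃ y, y ∈ (l k.succ).asIdeal ∧ y ∉ (l k.castSucc).asIdeal :=
    fun k => SetLike.exists_of_lt (l.step k)
  choose x hx hx' using hex
  have hind : AlgebraicIndependent K x := by
    refine (injective_iff_map_eq_zero _).mpr fun Q hQ => ?_
    by_contra hne
    exact aeval_notMem_of_chain l.length l x l.strictMono hx hx' Q hne
      (by rw [hQ]; exact zero_mem _)
  have := hind.lift_cardinalMk_le_trdeg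
  simp only [Cardinal.mk_fin, Cardinal.lift_natCast] at this
  have h2 := this.trans (Cardinal.lift_le.mpr h)
  rw [Cardinal.lift_natCast, Nat.cast_le] at h2
  exact_mod_cast h2

open Polynomial WithZero

/-! ### Centers of degree-like valuations -/

section Center
variable {D F : Type*} [CommRing D] [IsDomain D] [Field F] [Algebra D F] [IsFractionRing D F]

/-- The extension to `F` of a valuation on `D` that is at least `1` on nonzero elements. -/
noncomputable def extVal (v : Valuation D ℤᵐ⁰) (hv : ∀ f, f ≠ 0 → 1 ≤ v f) : Valuation F ℤᵐ⁰ :=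
  v.extendToLocalization (S := nonZeroDivisors D)
    (fun f hf h => by
      have := hv f (nonZeroDivisors.ne_zero hf)
      rw [(Valuation.mem_supp_iff v f).mp h] at this
      simp at this) F

variable (v : Valuation D ℤᵐ⁰) (hv : ∀ f, f ≠ 0 → 1 ≤ v f)

lemma extVal_algebraMap (f : D) : extVal (F := F) v hv (algebraMap D F f) = v f :=
  Valuation.extendToLocalization_apply_map_apply _ _ _ _

lemma extVal_le_one {r : F} (hr : r ∈ ReciprocalComplement D F) : extVal (F := F) v hv r ≤ 1 := by
  have : ReciprocalComplement D F ≤ (extVal (F := F) v hv).integer := by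
    refine Subring.closure_le.mpr ?_
    rintro _ ⟨f, hf, rfl⟩
    show extVal (F := F) v hv _ ≤ 1
    rw [map_inv₀, extVal_algebraMap]
    exact inv_le_one_of_one_le₀ (hv f hf)
  exact this hr

variable (F) in
/-- The center on the reciprocal complement of a valuation that is at least `1` on nonzero
elements of `D`: the prime of all `r` with value less than `1`. -/
noncomputable def center : PrimeSpectrum (ReciprocalComplement D F) where
  asIdeal :=
    { carrier := {r | extVal v hv (r : F) < 1}
      zero_mem' := by simp
      add_mem' := fun {a b} ha hb => by
        simpa using (Valuation.map_add _ _ _).trans_lt (max_lt ha hb)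
      smul_mem' := fun c x hx => by
        simp only [Set.mem_ofPred_eq, smul_eq_mul, Subring.coe_mul, map_mul] at hx ⊢
        exact (mul_le_of_le_one_left zero_le (extVal_le_one v hv c.2)).trans_lt hx }
  isPrime :=
    { ne_top' := fun h => by
        have : (1 : ReciprocalComplement D F) ∈ (⊤ : Ideal (ReciprocalComplement D F)) := trivial
        rw [← h] at this
        simp at this
      mem_or_mem' := fun {x y} hxy => by
        by_contra! h
        have hx : 1 ≤ extVal v hv (x : F) := not_lt.mp h.1
        have hy : 1 ≤ extVal v hv (y : F) := not_lt.mp h.2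
        have hxy : extVal v hv ((x * y : ReciprocalComplement D F) : F) < 1 := hxy
        rw [Subring.coe_mul, map_mul] at hxy
        exact absurd hxy (not_lt.mpr (one_le_mul_of_one_le_of_one_le hx hy)) }

lemma mem_center {r : ReciprocalComplement D F} :
    r ∈ (center F v hv).asIdeal ↔ extVal v hv (r : F) < 1 := Iff.rfl

variable (F) in
lemma inv_mem {f : D} (hf : f ≠ 0) : (algebraMap D F f)⁻¹ ∈ ReciprocalComplement D F :=
  Subring.subset_closure ⟨f, hf, rfl⟩

lemma inv_mem_center {f : D} (hf : f ≠ 0) :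
    (⟨_, inv_mem F hf⟩ : ReciprocalComplement D F) ∈ (center F v hv).asIdeal ↔ 1 < v f := by
  rw [mem_center, map_inv₀, extVal_algebraMap]
  exact inv_lt_one₀ (zero_lt_one.trans_le (hv f hf))

/-- The center of `v` is determined by the nonconstant elements `{f | 1 < v f}`, monotonically: each
`r` is a quotient `g / h` of `v`-constants plus an element `b` in both centers. If `v r < 1`, then
`g / h` has `v`-value less than `1`, which forces `g = 0` and `r = b`. -/
lemma center_mono (w : Valuation D ℤᵐ⁰) (hw : ∀ f, f ≠ 0 → 1 ≤ w f)
    (hvw : ∀ f, 1 < v f → 1 < w f) : center F v hv ≤ center F w hw := by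
  -- The bound `w (g / h) ≤ 1` is carried along because products involve terms `(g / h) * c`.
  have key : ∀ r ∈ ReciprocalComplement D F, ∃ g h : D, ∃ b : F, v g ≤ 1 ∧ v h ≤ 1 ∧ h ≠ 0 ∧
      r = algebraMap D F g / algebraMap D F h + b ∧ extVal v hv b < 1 ∧ extVal w hw b < 1 ∧
      extVal w hw (algebraMap D F g / algebraMap D F h) ≤ 1 := by
    intro r hr
    have inj {h : D} (hh : h ≠ 0) : algebraMap D F h ≠ 0 := by simpa using hh
    have quot {g h : D} (hg : v g ≤ 1) (hh0 : h ≠ 0) :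
        extVal v hv (algebraMap D F g / algebraMap D F h) ≤ 1 := by
      rw [map_div₀, extVal_algebraMap, extVal_algebraMap]
      exact div_le_one_of_le₀ (hg.trans (hv h hh0)) zero_le
    induction hr using Subring.closure_induction with
    | mem x hx =>
      obtain ⟨f, hf, rfl⟩ := hx
      rcases le_or_gt (v f) 1 with h | h
      · refine ⟨1, f, 0, by simp, h, hf, by simp, by simp, by simp, ?_⟩
        simpa using extVal_le_one w hw (inv_mem F hf)
      · exact ⟨0, 1, (algebraMap D F f)⁻¹, by simp, by simp, one_ne_zero, by simp,
          (inv_mem_center (F := F) v hv hf).mpr h,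
          (inv_mem_center (F := F) w hw hf).mpr (hvw f h), by simp⟩
    | zero => exact ⟨0, 1, 0, by simp, by simp, one_ne_zero, by simp, by simp, by simp, by simp⟩
    | one => exact ⟨1, 1, 0, by simp, by simp, one_ne_zero, by simp, by simp, by simp, by simp⟩
    | add x y _ _ hx hy =>
      obtain ⟨g, h, b, hg, hh, hh0, rfl, hb, hb', ha⟩ := hx
      obtain ⟨g', h', c, hg', hh', hh0', rfl, hc, hc', ha'⟩ := hy
      have e : algebraMap D F (g * h' + h * g') / algebraMap D F (h * h') =
          algebraMap D F g / algebraMap D F h + algebraMap D F g' / algebraMap D F h' := by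
        rw [div_add_div _ _ (inj hh0) (inj hh0')]; simp
      refine ⟨g * h' + h * g', h * h', b + c, ?_, ?_, mul_ne_zero hh0 hh0', ?_,
        Valuation.map_add_lt _ hb hc, Valuation.map_add_lt _ hb' hc', ?_⟩
      · exact v.integer.add_mem (v.integer.mul_mem hg hh') (v.integer.mul_mem hh hg')
      · exact v.integer.mul_mem hh hh'
      · rw [e]; ring
      · rw [e]; exact Valuation.map_add_le _ ha ha'
    | neg x _ hx =>
      obtain ⟨g, h, b, hg, hh, hh0, rfl, hb, hb', ha⟩ := hx
      refine ⟨-g, h, -b, by simpa using hg, hh, hh0, ?_, by simpa using hb, by simpa using hb', ?_⟩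
      · rw [map_neg]; ring
      · rwa [map_neg, neg_div, Valuation.map_neg]
    | mul x y _ _ hx hy =>
      obtain ⟨g, h, b, hg, hh, hh0, rfl, hb, hb', ha⟩ := hx
      obtain ⟨g', h', c, hg', hh', hh0', rfl, hc, hc', ha'⟩ := hy
      have e : algebraMap D F (g * g') / algebraMap D F (h * h') =
          (algebraMap D F g / algebraMap D F h) * (algebraMap D F g' / algebraMap D F h') := by
        rw [div_mul_div_comm]; simp
      have lt (u : Valuation F ℤᵐ⁰) (x b y c : F) (hx : u x ≤ 1) (hb : u b < 1) (hy : u y ≤ 1)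
          (hc : u c < 1) : u (x * c + b * (y + c)) < 1 := by
        refine Valuation.map_add_lt _ ?_ ?_
        · rw [map_mul]; exact (mul_le_of_le_one_left zero_le hx).trans_lt hc
        · rw [map_mul]
          exact (mul_le_of_le_one_right zero_le (Valuation.map_add_le _ hy hc.le)).trans_lt hb
      refine ⟨g * g', h * h', _, v.integer.mul_mem hg hg', v.integer.mul_mem hh hh',
        mul_ne_zero hh0 hh0', ?_, lt _ _ b _ c (quot hg hh0) hb (quot hg' hh0') hc,
        lt _ _ b _ c ha hb' ha' hc', ?_⟩
      · rw [e]; ring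
      · rw [e, map_mul]; exact mul_le_one' ha ha'
  intro r hr
  have hr : extVal v hv (r : F) < 1 := hr
  show extVal w hw (r : F) < 1
  obtain ⟨g, h, b, hg, hh, hh0, e, hb, hb', -⟩ := key r r.2
  rcases eq_or_ne g 0 with rfl | hg0
  · rw [e]; simpa using hb'
  · have h1 : extVal v hv (algebraMap D F g / algebraMap D F h) = 1 := by
      rw [map_div₀, extVal_algebraMap, extVal_algebraMap, le_antisymm hg (hv g hg0),
        le_antisymm hh (hv h hh0), div_one]
    have h2 : algebraMap D F g / algebraMap D F h = r - b := by rw [e]; ring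
    rw [h2] at h1
    exact absurd h1 ((Valuation.map_sub_lt _ hr hb).ne)

end Center

/-! ### The degree valuation -/

/-- The degree valuation `f ↦ exp (natDegree f)` on `A[X]`; its value at `0` is `0`. -/
noncomputable def degVal (A : Type*) [CommRing A] [IsDomain A] : Valuation A[X] ℤᵐ⁰ where
  toFun f := open Classical in if f = 0 then 0 else exp (f.natDegree : ℤ)
  map_zero' := by simp
  map_one' := by simp
  map_mul' f g := by
    by_cases hf : f = 0
    · simp [hf]
    by_cases hg : g = 0
    · simp [hg]
    simp [hf, hg, natDegree_mul hf hg, exp_add]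
  map_add_le_max' f g := by
    by_cases hf : f = 0
    · rw [hf, zero_add]; exact le_max_right _ _
    by_cases hg : g = 0
    · rw [hg, add_zero]; exact le_max_left _ _
    by_cases hfg : f + g = 0
    · simp [hfg]
    simp only [hf, hg, hfg, if_false, le_max_iff, exp_le_exp, Nat.cast_le]
    exact le_max_iff.mp (natDegree_add_le f g)

lemma degVal_apply {A : Type*} [CommRing A] [IsDomain A] {f : A[X]} (hf : f ≠ 0) :
    degVal A f = exp (f.natDegree : ℤ) := if_neg hf

lemma one_le_degVal {A : Type*} [CommRing A] [IsDomain A] {f : A[X]} (hf : f ≠ 0) :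
    1 ≤ degVal A f := by
  rw [degVal_apply hf, ← exp_zero, exp_le_exp]; positivity

lemma one_lt_degVal {A : Type*} [CommRing A] [IsDomain A] {f : A[X]} :
    1 < degVal A f ↔ 0 < f.natDegree := by
  by_cases hf : f = 0
  · simp [hf]
  rw [degVal_apply hf, ← exp_zero, exp_lt_exp]; simp

/-! ### Partial degrees in sheared coordinates -/

section Poly
variable {K : Type*} [Field K] {N : ℕ}

/-- Multiplication of the last `j` variables by a new variable `X`. The degree in `X` of the image
of `f` is the total degree of `f` in the last `j` variables. -/
noncomputable def scale (j : ℕ) :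
    MvPolynomial (Fin (N + 1)) K →ₐ[K] (MvPolynomial (Fin (N + 1)) K)[X] :=
  MvPolynomial.aeval fun k =>
    if N < k + j then C (MvPolynomial.X k) * X else C (MvPolynomial.X k)

/-- The substitution `X₀ ↦ X₀ + s * X_N ^ m`, an automorphism if `N > 0`, with inverse
given by `-s`. -/
noncomputable def shear (s : K) (m : ℕ) :
    MvPolynomial (Fin (N + 1)) K →ₐ[K] MvPolynomial (Fin (N + 1)) K :=
  MvPolynomial.aeval fun k =>
    if k = 0 then MvPolynomial.X 0 + MvPolynomial.C s * MvPolynomial.X (Fin.last N) ^ m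
    else MvPolynomial.X k

lemma eval_one_scale (j : ℕ) (f : MvPolynomial (Fin (N + 1)) K) : (scale j f).eval 1 = f := by
  have : ((aeval (1 : MvPolynomial (Fin (N + 1)) K)).restrictScalars K).comp (scale j) =
      AlgHom.id K (MvPolynomial (Fin (N + 1)) K) := by
    refine MvPolynomial.algHom_ext fun k => ?_
    by_cases h : N < k + j <;> simp [scale, h]
  simpa [aeval_def, eval₂_eq_eval_map] using DFunLike.congr_fun this f

/-- A polynomial of degree `0` in the last `j` variables has degree `0` in the last `i ≤ j` ones: it
is fixed by the substitution of `0` for the last `j` variables. -/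
lemma scale_of_natDegree_eq_zero {i j : ℕ} (hij : i ≤ j) {f : MvPolynomial (Fin (N + 1)) K}
    (hf : (scale j f).natDegree = 0) : (scale i f).natDegree = 0 := by
  let θ : MvPolynomial (Fin (N + 1)) K →ₐ[K] MvPolynomial (Fin (N + 1)) K :=
    MvPolynomial.aeval fun k : Fin (N + 1) =>
      if N < k + j then 0 else MvPolynomial.X k
  have h0 : ((aeval (0 : MvPolynomial (Fin (N + 1)) K)).restrictScalars K).comp (scale j) = θ := by
    refine MvPolynomial.algHom_ext fun k => ?_
    by_cases h : N < k + j <;> simp [scale, θ, h]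
  have h1 : (scale i).comp θ =
      ((CAlgHom (R := MvPolynomial (Fin (N + 1)) K)
        (A := MvPolynomial (Fin (N + 1)) K)).restrictScalars K).comp θ := by
    refine MvPolynomial.algHom_ext fun k => ?_
    by_cases h : N < k + j
    · simp [θ, h]
    · have h' : ¬ N < k + i := by omega
      simp [scale, θ, h, h']
  obtain ⟨c, hc⟩ := natDegree_eq_zero.mp hf
  have hcf : c = f := by rw [← eval_one_scale j f, ← hc]; simp
  have hθ : θ f = f := by
    rw [← DFunLike.congr_fun h0 f]
    simp [← hc, hcf]
  have := DFunLike.congr_fun h1 f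
  simp only [AlgHom.comp_apply, hθ] at this
  rw [this]
  simp

lemma shear_shear (hN : 0 < N) (s : K) (m : ℕ) (f : MvPolynomial (Fin (N + 1)) K) :
    shear s m (shear (-s) m f) = f := by
  have hl : Fin.last N ≠ 0 := by simpa [Fin.ext_iff] using hN.ne'
  have : (shear s m).comp (shear (-s) m) = AlgHom.id K (MvPolynomial (Fin (N + 1)) K) := by
    refine MvPolynomial.algHom_ext fun k => ?_
    by_cases h : k = 0
    · simp [shear, h, hl]
    · simp [shear, h]
  exact DFunLike.congr_fun this f

/-- The degree in the last `j` variables with respect to the coordinates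
`X₀ - X_N ^ m, X₁, …, X_N`, as a valuation. -/
noncomputable def shearVal (m j : ℕ) : Valuation (MvPolynomial (Fin (N + 1)) K) ℤᵐ⁰ :=
  (degVal (MvPolynomial (Fin (N + 1)) K)).comap ((scale j).comp (shear 1 m)).toRingHom

lemma shearVal_apply (m j : ℕ) (f : MvPolynomial (Fin (N + 1)) K) :
    shearVal m j f = degVal (MvPolynomial (Fin (N + 1)) K) (scale j (shear 1 m f)) := rfl

lemma one_lt_shearVal {m j : ℕ} {f : MvPolynomial (Fin (N + 1)) K} :
    1 < shearVal m j f ↔ 0 < (scale j (shear 1 m f)).natDegree := one_lt_degVal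

lemma one_le_shearVal (hN : 0 < N) (m j : ℕ) (f : MvPolynomial (Fin (N + 1)) K) (hf : f ≠ 0) :
    1 ≤ shearVal m j f := by
  refine one_le_degVal fun h => hf ?_
  have h : scale j (shear 1 m f) = 0 := h
  have h1 : shear 1 m f = 0 := by rw [← eval_one_scale j (shear 1 m f), h]; simp
  have h2 := shear_shear hN (-1) m f
  rw [neg_neg, h1, map_zero] at h2
  exact h2.symm

variable (F : Type*) [Field F] [Algebra (MvPolynomial (Fin (N + 1)) K) F]
  [IsFractionRing (MvPolynomial (Fin (N + 1)) K) F]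

/-- The center of `shearVal m j` on the reciprocal complement. -/
noncomputable def shearPrime (hN : 0 < N) (m j : ℕ) :
    PrimeSpectrum (ReciprocalComplement (MvPolynomial (Fin (N + 1)) K) F) :=
  center F (shearVal m j) (one_le_shearVal hN m j)

lemma shearPrime_lt (hN : 0 < N) (m : ℕ) {j : ℕ} (hj : j < N + 1) :
    shearPrime (K := K) F hN m j < shearPrime F hN m (j + 1) := by
  refine lt_of_le_not_ge (center_mono _ _ _ _ fun f h => ?_) fun hle => ?_
  · rw [one_lt_shearVal] at h ⊢
    contrapose! h
    exact (scale_of_natDegree_eq_zero (Nat.le_succ j) (Nat.le_zero.mp h)).le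
  -- The `(j + 1)`-st variable from the end, in sheared coordinates, separates the two primes.
  · let k : Fin (N + 1) := ⟨N - j, by omega⟩
    let f : MvPolynomial (Fin (N + 1)) K := shear (-1) m (MvPolynomial.X k)
    have hf : shear 1 m f = MvPolynomial.X k := shear_shear hN 1 m _
    have hf0 : f ≠ 0 := by
      intro h
      rw [h, map_zero] at hf
      exact MvPolynomial.X_ne_zero k hf.symm
    have h1 : 1 < shearVal m (j + 1) f := by
      rw [one_lt_shearVal, hf]
      have : N < (k : ℕ) + (j + 1) := by simp only [k]; omega
      simp [scale, this]
    have h2 := (inv_mem_center (F := F) _ (one_le_shearVal hN m j) hf0).mp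
      (hle ((inv_mem_center (F := F) _ (one_le_shearVal hN m (j + 1)) hf0).mpr h1))
    rw [one_lt_shearVal, hf] at h2
    have : ¬ N < (k : ℕ) + j := by simp only [k]; omega
    simp [scale, this] at h2

lemma shearPrime_injective (hN : 0 < N) {i : ℕ} (hi1 : 1 ≤ i) (hi2 : i ≤ N) :
    Function.Injective fun m => shearPrime (K := K) F hN m i := by
  intro m m' hmm
  by_contra hne
  -- Here `f = X₀ - X_N ^ m`, which is constant for `shearVal m i` only.
  let f : MvPolynomial (Fin (N + 1)) K := shear (-1) m (MvPolynomial.X 0)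
  have hf : shear 1 m f = MvPolynomial.X 0 := shear_shear hN 1 m _
  have hf0 : f ≠ 0 := by
    intro h
    rw [h, map_zero] at hf
    exact MvPolynomial.X_ne_zero 0 hf.symm
  have h1 : ¬ 1 < shearVal m i f := by
    rw [one_lt_shearVal, hf]
    have : ¬ N < i := by omega
    simp [scale, this]
  rw [← inv_mem_center (F := F) _ (one_le_shearVal hN m i) hf0] at h1
  have h2 : ¬ 1 < shearVal m' i f := by
    rw [← inv_mem_center (F := F) _ (one_le_shearVal hN m' i) hf0]
    have hmm : center F _ (one_le_shearVal (K := K) hN m i) =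
      center F _ (one_le_shearVal (K := K) hN m' i) := hmm
    rwa [← hmm]
  rw [one_lt_shearVal, not_lt, Nat.le_zero] at h2
  obtain ⟨c, hc⟩ := natDegree_eq_zero.mp h2
  have hi : ¬ N < i := by omega
  have hi' : N < N + i := by omega
  have hl : Fin.last N ≠ 0 := by simpa [Fin.ext_iff] using hN.ne'
  have e : scale i (shear 1 m' f) = C (MvPolynomial.X 0) +
      (C (MvPolynomial.X (Fin.last N)) * X) ^ m' - (C (MvPolynomial.X (Fin.last N)) * X) ^ m := by
    simp [f, shear, scale, hi, hi', hl]
    ring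
  rw [e, mul_pow, mul_pow, ← C_pow, ← C_pow] at hc
  -- Compare coefficients in a positive degree: at `m`, or at `m'` if `m = 0`.
  rcases Nat.eq_zero_or_pos m with rfl | hm
  · have := congrArg (fun p => p.coeff m') hc
    simp [coeff_C, Ne.symm hne, coeff_one, -map_pow] at this
    exact pow_ne_zero m' (MvPolynomial.X_ne_zero _) this.symm
  · have := congrArg (fun p => p.coeff m) hc
    simp [coeff_C, hm.ne', hne, -map_pow] at this

/-- The reciprocal complement contains `K` and lies in `F`, which has transcendence degree
`N + 1`. -/
lemma krullDim_recip_le :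
    Order.krullDim (PrimeSpectrum (ReciprocalComplement (MvPolynomial (Fin (N + 1)) K) F)) ≤
      (N + 1 : ℕ) := by
  let _ : Algebra K F :=
    ((algebraMap (MvPolynomial (Fin (N + 1)) K) F).comp MvPolynomial.C).toAlgebra
  have : IsScalarTower K (MvPolynomial (Fin (N + 1)) K) F :=
    IsScalarTower.of_algebraMap_eq fun _ => rfl
  let R : Subalgebra K F := 
    { ReciprocalComplement (MvPolynomial (Fin (N + 1)) K) F with
      algebraMap_mem' := fun c => by
        rcases eq_or_ne c 0 with rfl | hc
        · simp
        · have := inv_mem F (f := (MvPolynomial.C c⁻¹ : MvPolynomial (Fin (N + 1)) K))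
            (by simpa using hc)
          have e : (algebraMap (MvPolynomial (Fin (N + 1)) K) F (MvPolynomial.C c⁻¹))⁻¹ =
              algebraMap K F c := by
            have : algebraMap (MvPolynomial (Fin (N + 1)) K) F (MvPolynomial.C c⁻¹) =
              algebraMap K F c⁻¹ := rfl
            rw [this, map_inv₀, inv_inv]
          rwa [e] at this }
  have : Algebra.IsAlgebraic (MvPolynomial (Fin (N + 1)) K) F :=
    IsLocalization.isAlgebraic F (nonZeroDivisors (MvPolynomial (Fin (N + 1)) K))
  have hb := ((IsTranscendenceBasis.mvPolynomial (Fin (N + 1)) K).algebraMap_comp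
    (A := F)).lift_cardinalMk_eq_trdeg
  have hF : Algebra.trdeg K F = (N + 1 : ℕ) := by
    apply Cardinal.lift_injective
    rw [← hb]; simp
  exact krullDim_le_of_trdeg (K := K) (A := R) (N + 1)
    (hF ▸ trdeg_le_of_injective R.val Subtype.val_injective)

lemma height_shearPrime (hN : 0 < N) (m : ℕ) {i : ℕ} (hi : i ≤ N + 1) :
    Order.height (shearPrime (K := K) F hN m i) = i := by
  let l : LTSeries (PrimeSpectrum (ReciprocalComplement (MvPolynomial (Fin (N + 1)) K) F)) :=
    { length := N + 1
      toFun := fun j => shearPrime F hN m j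
      step := fun j => shearPrime_lt F hN m j.2 }
  have hh := Order.index_le_height l ⟨i, Nat.lt_succ_of_le hi⟩
  have hc := Order.rev_index_le_coheight l ⟨i, Nat.lt_succ_of_le hi⟩
  have hk := krullDim_recip_le (K := K) (N := N) F
  rw [Order.krullDim_eq_iSup_height_add_coheight_of_nonempty] at hk
  have hk := (le_iSup (fun a => Order.height a + Order.coheight a)
    (shearPrime (K := K) F hN m i)).trans (WithBot.coe_le_coe.mp hk)
  change (i : ℕ∞) ≤ Order.height (shearPrime (K := K) F hN m i) at hh
  change _ ≤ Order.coheight (shearPrime (K := K) F hN m i) at hc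
  simp only [Fin.val_rev, l] at hc
  generalize Order.height (shearPrime (K := K) F hN m i) = a at *
  generalize Order.coheight (shearPrime (K := K) F hN m i) = b at *
  have ha : a ≠ ⊤ := by rintro rfl; simp at hk
  have hb : b ≠ ⊤ := by rintro rfl; simp at hk
  lift a to ℕ using ha
  lift b to ℕ using hb
  norm_cast at *
  have := Nat.sub_add_cancel hi
  omega

end Poly

/-- For `n ≥ 2` and each `1 ≤ i ≤ n − 1`, the reciprocal complement of `K[X₁, …, Xₙ]`
has infinitely many prime ideals of height `i`. -/
theorem recip_polynomialRing_infinitely_many_primes_of_height (K : Type*) [Field K]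
    (n : ℕ) (hn : 2 ≤ n) (F : Type*) [Field F] [Algebra (MvPolynomial (Fin n) K) F]
    [IsFractionRing (MvPolynomial (Fin n) K) F]
    (i : ℕ) (hi1 : 1 ≤ i) (hi2 : i ≤ n - 1) :
    {p : PrimeSpectrum (ReciprocalComplement (MvPolynomial (Fin n) K) F) |
      Order.height p = i}.Infinite := by
  obtain ⟨N, rfl⟩ : ∃ N, n = N + 1 := ⟨n - 1, by omega⟩
  exact Set.infinite_of_injective_forall_mem
    (shearPrime_injective (K := K) F (by omega) hi1 (by omega))
    fun m => height_shearPrime F (by omega) m (by omega)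
end

section
/- Let K be a field and let R = R(K[X, Y]) be the reciprocal complement of the polynomial ring in two variables. Then for every height one prime ideal p of R, the localization R_p is a Noetherian local integral domain of Krull dimension one. -/
/-! ### A Krull–Akizuki bound -/

open Polynomial in
/-- A family in `B` that is independent over `L` modulo `t` is independent over `L[t]`: in a
relation with coefficients in `L[t]` the constant terms vanish modulo `t`, and dividing the
relation by `t` lowers the degrees. -/
theorem linInd_adjoin_of_quotient {L B F : Type*} [Field L] [CommRing B] [Field F] [Algebra L B]
    [Algebra B F] [Algebra L F] [IsScalarTower L B F] (hinj : Function.Injective (algebraMap B F))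
    {t : B} (ht : t ≠ 0) {ι : Type*} [Fintype ι] (b : ι → B)
    (hb : LinearIndependent L fun i => Ideal.Quotient.mk (Ideal.span {t}) (b i)) :
    LinearIndependent (Algebra.adjoin L {algebraMap B F t}) fun i => algebraMap B F (b i) := by
  have key : ∀ (n : ℕ) (c : ι → L[X]), (∀ i, (c i).natDegree < n) →
      ∑ i, aeval t (c i) * b i = 0 → ∀ i, c i = 0 := by
    intro n
    induction n with
    | zero => intro c hc _ i; exact absurd (hc i) (by simp)
    | succ n ih =>
      intro c hc h
      -- modulo `t` only the constant coefficients survive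
      have h0 : ∀ i, (c i).coeff 0 = 0 := by
        refine Fintype.linearIndependent_iff.mp hb _ ?_
        have h1 := congrArg (Ideal.Quotient.mk (Ideal.span {t})) h
        rw [map_sum, map_zero] at h1
        rw [← h1]
        refine Finset.sum_congr rfl fun i _ => ?_
        have h2 : aeval t (c i) = t * aeval t (c i).divX + algebraMap L B ((c i).coeff 0) := by
          have h3 := congrArg (aeval t) (X_mul_divX_add (c i))
          simpa only [map_add, map_mul, aeval_X, aeval_C] using h3.symm
        have h3 : Ideal.Quotient.mk (Ideal.span {t}) t = 0 :=
          Ideal.Quotient.eq_zero_iff_mem.mpr (Ideal.mem_span_singleton_self t)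
        rw [h2, map_mul, map_add, map_mul, h3, zero_mul, zero_add, Algebra.smul_def]
        rfl
      have h4 : ∀ i, c i = X * (c i).divX := fun i => by
        conv_lhs => rw [← X_mul_divX_add (c i), h0 i, map_zero, add_zero]
      have h5 : ∀ i, (c i).divX = 0 := by
        by_cases hn : n = 0
        · intro i
          have := hc i
          rw [eq_C_of_natDegree_le_zero (p := c i) (by omega)]
          simp
        refine ih _ (fun i => ?_) ?_
        · rw [natDegree_divX_eq_natDegree_tsub_one]
          have := hc i
          omega
        · have : IsDomain B := hinj.isDomain (algebraMap B F)
          refine (mul_eq_zero.mp (?_ : t * _ = 0)).resolve_left ht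
          rw [← h, Finset.mul_sum]
          refine Finset.sum_congr rfl fun i _ => ?_
          conv_rhs => rw [h4 i]
          simp [mul_assoc]
      intro i
      rw [h4 i, h5 i, mul_zero]
  rw [Fintype.linearIndependent_iff]
  intro g hg
  have hex : ∀ i, ∃ q : L[X], aeval (algebraMap B F t) q = (g i : F) := fun i => by
    have := (g i).2
    exact (Algebra.adjoin_singleton_eq_range_aeval L (algebraMap B F t)).le this
  choose c hc using hex
  have h6 := key (Finset.univ.sup (fun i => (c i).natDegree) + 1) c
    (fun i => Nat.lt_succ_of_le (Finset.le_sup (f := fun i => (c i).natDegree)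
      (Finset.mem_univ i))) (hinj (by
      rw [map_sum, map_zero, ← hg]
      refine Finset.sum_congr rfl fun i _ => ?_
      rw [map_mul, ← aeval_algebraMap_apply, hc i]
      rfl))
  intro i
  ext
  rw [← hc i, h6 i]
  simp

open IntermediateField.algebraAdjoinAdjoin in
theorem linInd_fieldAdjoin {L F : Type*} [Field L] [Field F] [Algebra L F] (x : F)
    {ι : Type*} (b : ι → F) (hb : LinearIndependent (Algebra.adjoin L {x}) b) :
    LinearIndependent (IntermediateField.adjoin L {x}) b :=
  (LinearIndependent.iff_fractionRing (Algebra.adjoin L {x}) _).mp hb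

/-- If `F ⊇ B` is finite over `L(t)`, then `B / tB` is finite-dimensional over `L`, so every ideal
of `B` containing `t` is finitely generated. -/
theorem fg_of_mem_of_finite {L B F : Type*} [Field L] [CommRing B] [Field F] [Algebra L B]
    [Algebra B F] [Algebra L F] [IsScalarTower L B F] (hinj : Function.Injective (algebraMap B F))
    {t : B} (ht : t ≠ 0)
    [FiniteDimensional (IntermediateField.adjoin L {algebraMap B F t}) F]
    (I : Ideal B) (htI : t ∈ I) : I.FG := by
  have hfin : Module.Finite L (B ⧸ Ideal.span {t}) := by
    have hr : Module.rank L (B ⧸ Ideal.span {t}) ≤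
        (Module.finrank (IntermediateField.adjoin L {algebraMap B F t}) F : ℕ) := by
      refine rank_le fun s hs => ?_
      choose b hb using fun x : B ⧸ Ideal.span {t} => Ideal.Quotient.mk_surjective x
      have h1 : LinearIndependent L fun i : s => Ideal.Quotient.mk (Ideal.span {t}) (b i) := by
        simpa only [hb] using hs
      have h2 := linInd_fieldAdjoin _ _ (linInd_adjoin_of_quotient hinj ht _ h1)
      simpa using h2.fintype_card_le_finrank
    exact Module.rank_lt_aleph0_iff.mp (hr.trans_lt (Cardinal.natCast_lt_aleph0))
  have hnoeth : IsNoetherian B (B ⧸ Ideal.span {t}) :=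
    isNoetherian_of_tower L inferInstance
  refine Submodule.fg_of_fg_map_of_fg_inf_ker (Ideal.span {t}).mkQ (IsNoetherian.noetherian _) ?_
  rw [Submodule.ker_mkQ, inf_eq_right.mpr ((Ideal.span_singleton_le_iff_mem _).mpr htI)]
  exact ⟨{t}, by simp⟩

/-- The field `F = K(X, Y)` is finite over `K(h)(t)` when `h, t` are algebraically independent over
`K`: it is finitely generated, and algebraic because its transcendence degree over `K` is two. -/
theorem finite_over_adjoin_pair (K : Type*) [Field K]
    (F : Type*) [Field F] [Algebra (MvPolynomial (Fin 2) K) F] [Algebra K F]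
    [IsScalarTower K (MvPolynomial (Fin 2) K) F]
    [IsFractionRing (MvPolynomial (Fin 2) K) F] {h t : F} (hh : Transcendental K h)
    (ht : Transcendental (IntermediateField.adjoin K {h}) t) :
    FiniteDimensional (IntermediateField.adjoin (IntermediateField.adjoin K {h}) {t}) F := by
  have hK : Algebra.trdeg K F = 2 := by
    have h1 := lift_trdeg_add_eq K (MvPolynomial (Fin 2) K) F
    have : Algebra.IsAlgebraic (MvPolynomial (Fin 2) K) F :=
      IsLocalization.isAlgebraic _ (nonZeroDivisors (MvPolynomial (Fin 2) K))
    have h2 : Algebra.trdeg (MvPolynomial (Fin 2) K) F = 0 := trdeg_eq_zero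
    rw [h2, MvPolynomial.trdeg_of_isDomain] at h1
    simpa using h1.symm
  let E := IntermediateField.adjoin K {h}
  let M := IntermediateField.adjoin E {t}
  have e1 : Algebra.trdeg K E + Algebra.trdeg E F = Algebra.trdeg K F :=
    trdeg_add_eq K E
  have f1 : FaithfulSMul E M :=
    (faithfulSMul_iff_algebraMap_injective E M).mpr (algebraMap E M).injective
  have f2 : FaithfulSMul M F :=
    (faithfulSMul_iff_algebraMap_injective M F).mpr (algebraMap M F).injective
  have e2 : Algebra.trdeg E M + Algebra.trdeg M F = Algebra.trdeg E F :=
    trdeg_add_eq E M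
  have t1 : Algebra.Transcendental K E :=
    ⟨IntermediateField.AdjoinSimple.gen K h, fun hc => hh (by
      simpa using hc.algebraMap (A := F))⟩
  have t2 : Algebra.Transcendental E M :=
    ⟨IntermediateField.AdjoinSimple.gen E t, fun hc => ht (by
      simpa using hc.algebraMap (A := F))⟩
  have l1 := Cardinal.one_le_iff_pos.mpr (trdeg_pos K E)
  have l2 := Cardinal.one_le_iff_pos.mpr (trdeg_pos E M)
  rw [hK, ← e2] at e1
  have hz : Algebra.trdeg M F = 0 := by
    generalize Algebra.trdeg K E = a at *
    generalize Algebra.trdeg E M = b at *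
    generalize Algebra.trdeg M F = c at *
    have fa : a < Cardinal.aleph0 := lt_of_le_of_lt (self_le_add_right a _)
      (e1.trans_lt (Cardinal.natCast_lt_aleph0 (n := 2)))
    have fbc : b + c < Cardinal.aleph0 := lt_of_le_of_lt (self_le_add_left _ a)
      (e1.trans_lt (Cardinal.natCast_lt_aleph0 (n := 2)))
    have fb := lt_of_le_of_lt (self_le_add_right b c) fbc
    have fc := lt_of_le_of_lt (self_le_add_left c b) fbc
    lift a to ℕ using fa
    lift b to ℕ using fb
    lift c to ℕ using fc
    norm_cast at *
    omega
  have alg : Algebra.IsAlgebraic M F := trdeg_eq_zero_iff.mp hz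
  have e : Algebra.EssFiniteType K F := by
    have : Algebra.EssFiniteType (MvPolynomial (Fin 2) K) F :=
      .of_isLocalization _ (nonZeroDivisors (MvPolynomial (Fin 2) K))
    exact .comp K (MvPolynomial (Fin 2) K) F
  have e' : Algebra.EssFiniteType E F := .of_comp K E F
  have : Algebra.EssFiniteType M F := .of_comp E M F
  exact Algebra.finite_of_essFiniteType_of_isAlgebraic

/-! ### Weighted degree valuations -/

open WithZero in
/-- The weighted degree as a valuation of `K(X, Y)`, normalized so that nonzero polynomials have
values at least `1`. It is the pullback of the valuation at infinity of `F(T)` along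
`X_i ↦ X_i T ^ w_i`. -/
theorem exists_weight_valuation (K : Type*) [Field K]
    (F : Type*) [Field F] [Algebra (MvPolynomial (Fin 2) K) F]
    [IsFractionRing (MvPolynomial (Fin 2) K) F] (w : Fin 2 → ℕ) (hw : ∀ i, 0 < w i) :
    ∃ v : Valuation F (WithZero (Multiplicative ℤ)),
      (∀ f : MvPolynomial (Fin 2) K, (∀ c, f ≠ MvPolynomial.C c) →
        1 < v (algebraMap _ F f)) ∧
      (∀ c : K, c ≠ 0 → v (algebraMap (MvPolynomial (Fin 2) K) F (MvPolynomial.C c)) = 1) ∧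
      ∀ i, v (algebraMap (MvPolynomial (Fin 2) K) F (MvPolynomial.X i)) = exp (w i : ℤ) := by
  have hinj : Function.Injective (algebraMap (MvPolynomial (Fin 2) K) F) :=
    IsFractionRing.injective _ _
  let φ : MvPolynomial (Fin 2) K →+* Polynomial F := MvPolynomial.eval₂Hom
    (Polynomial.C.comp ((algebraMap (MvPolynomial (Fin 2) K) F).comp MvPolynomial.C))
    (fun i => Polynomial.C (algebraMap (MvPolynomial (Fin 2) K) F (MvPolynomial.X i)) *
      Polynomial.X ^ w i)
  have hC : ∀ c, φ (MvPolynomial.C c) =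
      Polynomial.C (algebraMap (MvPolynomial (Fin 2) K) F (MvPolynomial.C c)) := fun c => by
    simp [φ]
  have hX : ∀ i, φ (MvPolynomial.X i) =
      Polynomial.C (algebraMap (MvPolynomial (Fin 2) K) F (MvPolynomial.X i)) *
        Polynomial.X ^ w i := fun i => by
    simp [φ]
  have h1 : ∀ f, (φ f).eval 1 = algebraMap _ F f := fun f =>
    RingHom.congr_fun (f := (Polynomial.evalRingHom 1).comp φ) (MvPolynomial.ringHom_ext
      (fun c => by simp [hC]) (fun i => by simp [hX])) f
  have h0 : ∀ f, (φ f).eval 0 =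
      algebraMap (MvPolynomial (Fin 2) K) F (MvPolynomial.C (MvPolynomial.constantCoeff f)) :=
    fun f => RingHom.congr_fun (f := (Polynomial.evalRingHom 0).comp φ)
      (g := (algebraMap (MvPolynomial (Fin 2) K) F).comp
        (MvPolynomial.C.comp MvPolynomial.constantCoeff)) (MvPolynomial.ringHom_ext
      (fun c => by simp [hC]) (fun i => by simp [hX, (hw i).ne'])) f
  -- setting `T = 1` recovers `f` from `φ f`
  have hφ : Function.Injective φ := fun f g h =>
    hinj ((h1 f).symm.trans ((congrArg _ h).trans (h1 g)))
  have hψ : Function.Injective ((algebraMap (Polynomial F) (RatFunc F)).comp φ) :=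
    (IsFractionRing.injective (Polynomial F) (RatFunc F)).comp hφ
  classical
  let v := (RatFunc.inftyValuation F).comap (IsFractionRing.lift (K := F) hψ)
  have hv : ∀ f : MvPolynomial (Fin 2) K, f ≠ 0 →
      v (algebraMap _ F f) = exp ((φ f).natDegree : ℤ) := fun f hf => by
    have hf' : φ f ≠ 0 := fun h => hf (hφ (by rw [h, map_zero]))
    rw [← RatFunc.inftyValuation.polynomial F hf']
    simp only [v, Valuation.comap_apply, IsFractionRing.lift_algebraMap]
    rfl
  refine ⟨v, fun f hf => ?_, fun c hc => ?_, fun i => ?_⟩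
  · rw [hv f (by simpa using hf 0), ← exp_zero, exp_lt_exp]
    by_contra hd
    -- if `φ f` does not involve `T`, comparing `T = 0` with `T = 1` makes `f` constant
    have hd' : φ f = Polynomial.C ((φ f).coeff 0) :=
      Polynomial.eq_C_of_natDegree_eq_zero (by omega)
    apply hf (MvPolynomial.constantCoeff f)
    apply hinj
    rw [← h0, ← h1, hd', Polynomial.eval_C, Polynomial.eval_C]
  · rw [hv _ (by simpa using hc), hC]
    simp
  · rw [hv _ (MvPolynomial.X_ne_zero i), hX, Polynomial.natDegree_C_mul_X_pow]
    simp

/-! ### The reciprocal complement and its height one primes -/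

theorem inv_mem_recip {T F : Type*} [CommRing T] [Field F] [Algebra T F] {f : T} (hf : f ≠ 0) :
    (algebraMap T F f)⁻¹ ∈ ReciprocalComplement T F :=
  Subring.subset_closure ⟨f, hf, rfl⟩

theorem inv_algebraMap_C {K F σ : Type*} [Field K] [Field F] [Algebra (MvPolynomial σ K) F]
    (c : K) : (algebraMap (MvPolynomial σ K) F (MvPolynomial.C c))⁻¹ =
      algebraMap (MvPolynomial σ K) F (MvPolynomial.C c⁻¹) :=
  (map_inv₀ ((algebraMap (MvPolynomial σ K) F).comp MvPolynomial.C) c).symm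

theorem const_mem_recip {K F σ : Type*} [Field K] [Field F] [Algebra (MvPolynomial σ K) F]
    (c : K) :
    algebraMap (MvPolynomial σ K) F (MvPolynomial.C c) ∈
      ReciprocalComplement (MvPolynomial σ K) F := by
  by_cases hc : c = 0
  · simp [hc]
  · have h := inv_mem_recip (F := F) (f := (MvPolynomial.C c⁻¹ : MvPolynomial σ K))
      (by simpa using hc)
    rwa [inv_algebraMap_C, inv_inv] at h

/-- The inclusion of the constants `K` into the reciprocal complement of a polynomial ring. -/
noncomputable def constHom (K F σ : Type*) [Field K] [Field F] [Algebra (MvPolynomial σ K) F] :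
    K →+* ReciprocalComplement (MvPolynomial σ K) F :=
  ((algebraMap (MvPolynomial σ K) F).comp MvPolynomial.C).codRestrict _ const_mem_recip

/-- A prime properly contained in a height one prime of a domain is zero. -/
theorem eq_bot_of_lt_of_height_eq_one {R : Type*} [CommRing R] [IsDomain R] {p q : Ideal R}
    (hp : p.IsPrime) (hq : q.IsPrime)
    (hht : Order.height (⟨p, hp⟩ : PrimeSpectrum R) = 1) (h : q < p) : q = ⊥ := by
  have hlt : (⟨q, hq⟩ : PrimeSpectrum R) < ⟨p, hp⟩ := h
  have hq0 : Order.height (⟨q, hq⟩ : PrimeSpectrum R) < 1 := by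
    rw [← hht]
    exact Order.height_strictMono hlt ((Order.height_mono hlt.le).trans_lt (by simp [hht]))
  have hmin := Order.height_eq_zero.mp (Order.lt_one_iff.mp hq0)
  have : (⟨q, hq⟩ : PrimeSpectrum R) ≤ ⟨⊥, Ideal.isPrime_bot⟩ :=
    hmin (show (⊥ : Ideal R) ≤ q from bot_le)
  exact le_bot_iff.mp this

open WithZero in
/-- A height one prime of `R(K[X, Y])` does not contain the reciprocals of all nonconstant
polynomials. -/
theorem exists_recip_notMem (K : Type*) [Field K]
    (F : Type*) [Field F] [Algebra (MvPolynomial (Fin 2) K) F]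
    [IsFractionRing (MvPolynomial (Fin 2) K) F]
    (p : Ideal (ReciprocalComplement (MvPolynomial (Fin 2) K) F)) (hp : p.IsPrime)
    (hht : Order.height
      (⟨p, hp⟩ : PrimeSpectrum (ReciprocalComplement (MvPolynomial (Fin 2) K) F)) = 1) :
    ∃ (f : MvPolynomial (Fin 2) K) (hf : f ≠ 0), (∀ c, f ≠ MvPolynomial.C c) ∧
      (⟨_, inv_mem_recip hf⟩ : ReciprocalComplement (MvPolynomial (Fin 2) K) F) ∉ p := by
  by_contra! hcon
  let R := ReciprocalComplement (MvPolynomial (Fin 2) K) F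
  have hXne : ∀ (i : Fin 2) c, (MvPolynomial.X i : MvPolynomial (Fin 2) K) ≠ MvPolynomial.C c :=
    fun i c h => by
      have := congrArg MvPolynomial.totalDegree h
      simp at this
  let a : Fin 2 → R := fun i => ⟨_, inv_mem_recip (MvPolynomial.X_ne_zero i)⟩
  have ha : ∀ i, a i ∈ p := fun i => hcon _ (MvPolynomial.X_ne_zero i) (hXne i)
  -- a valuation below `1` on reciprocals of nonconstant polynomials is trivial outside `p`
  have hint : ∀ v : Valuation F (WithZero (Multiplicative ℤ)),
      (∀ f : MvPolynomial (Fin 2) K, (∀ c, f ≠ MvPolynomial.C c) → 1 < v (algebraMap _ F f)) →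
      (∀ c : K, c ≠ 0 → v (algebraMap (MvPolynomial (Fin 2) K) F (MvPolynomial.C c)) = 1) →
      (∀ x : R, v x ≤ 1) ∧ ∀ x : R, x ∉ p → v x = 1 := by
    intro v hv hvC
    have hle : R ≤ v.integer := by
      refine Subring.closure_le.mpr ?_
      rintro _ ⟨f, hf, rfl⟩
      change v _ ≤ 1
      rw [map_inv₀]
      by_cases hc : ∃ c, f = MvPolynomial.C c
      · obtain ⟨c, rfl⟩ := hc
        rw [hvC c (by rintro rfl; simp at hf), inv_one]
      · exact inv_le_one_of_one_le₀ (hv f (not_exists.mp hc)).le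
    have hle' : ∀ x : R, v x ≤ 1 := fun x => hle x.2
    refine ⟨hle', ?_⟩
    let Q : Ideal R :=
      { carrier := {y | v y < 1}
        add_mem' := fun {y z} hy hz => v.map_add_lt hy hz
        zero_mem' := by simp
        smul_mem' := fun r y hy => by
          change v (r * y : F) < 1
          rw [map_mul]
          exact (mul_le_of_le_one_left' (hle' r)).trans_lt hy }
    -- the elements of `R` of the form `c + y`, with `c` constant and `y ∈ p ⊓ Q`, form a subring
    have key : ∀ x ∈ R, ∃ (c : K) (y : R), y ∈ p ⊓ Q ∧ x = (constHom K F (Fin 2) c + y : R) := by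
      intro x hx
      induction hx using Subring.closure_induction with
      | mem x hx =>
        obtain ⟨f, hf, rfl⟩ := hx
        by_cases hc : ∃ c, f = MvPolynomial.C c
        · obtain ⟨c, rfl⟩ := hc
          refine ⟨c⁻¹, 0, zero_mem _, ?_⟩
          rw [add_zero]
          exact inv_algebraMap_C c
        · refine ⟨0, ⟨_, inv_mem_recip hf⟩, ⟨hcon f hf (not_exists.mp hc), ?_⟩, by simp⟩
          change v _ < 1
          rw [map_inv₀]
          exact inv_lt_one_of_one_lt₀ (hv f (not_exists.mp hc))
      | zero => exact ⟨0, 0, zero_mem _, by simp⟩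
      | one => exact ⟨1, 0, zero_mem _, by simp⟩
      | add x z _ _ hx hz =>
        obtain ⟨c, y, hy, rfl⟩ := hx
        obtain ⟨d, u, hu, rfl⟩ := hz
        refine ⟨c + d, y + u, add_mem hy hu, ?_⟩
        rw [← Subring.coe_add, map_add]
        congr 1
        ring
      | neg x _ hx =>
        obtain ⟨c, y, hy, rfl⟩ := hx
        refine ⟨-c, -y, neg_mem hy, ?_⟩
        rw [← Subring.coe_neg, map_neg]
        congr 1
        ring
      | mul x z _ _ hx hz =>
        obtain ⟨c, y, hy, rfl⟩ := hx
        obtain ⟨d, u, hu, rfl⟩ := hz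
        refine ⟨c * d, (constHom K F (Fin 2) c + y) * u + constHom K F (Fin 2) d * y,
          add_mem (Ideal.mul_mem_left _ _ hu) (Ideal.mul_mem_left _ _ hy), ?_⟩
        rw [← Subring.coe_mul, map_mul]
        congr 1
        ring
    intro x hxp
    obtain ⟨c, y, hy, hxy⟩ := key x x.2
    have hx : x = constHom K F (Fin 2) c + y := Subtype.ext hxy
    have hc : c ≠ 0 := by
      rintro rfl
      rw [map_zero, zero_add] at hx
      exact hxp (hx ▸ hy.1)
    have h1 : v (constHom K F (Fin 2) c : R) = 1 := hvC c hc
    rw [hxy, Subring.coe_add, v.map_add_eq_of_lt_left (by rw [h1]; exact hy.2), h1]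
  -- height one makes a power of `1/X₀` divisible by `1/X₁`, up to a factor outside `p`
  have hdis : ¬ Disjoint (Ideal.span {a 1} : Set R) (Submonoid.powers (a 0) ⊔ p.primeCompl :
      Submonoid R) := by
    intro hd
    obtain ⟨q, hq, hle, hqd⟩ := Ideal.exists_le_prime_disjoint _ _ hd
    have hqp : q ≤ p := fun x hx => by
      by_contra hxp
      exact Set.disjoint_left.mp hqd hx (Submonoid.mem_sup_right (S := Submonoid.powers (a 0)) hxp)
    have hlt : q < p := lt_of_le_of_ne hqp (by
      rintro rfl
      exact Set.disjoint_left.mp hqd (ha 0)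
        (Submonoid.mem_sup_left (Submonoid.mem_powers (a 0))))
    have hbot := eq_bot_of_lt_of_height_eq_one hp hq hht hlt
    have h0 : a 1 ∈ q := hle (Ideal.mem_span_singleton_self _)
    rw [hbot, Ideal.mem_bot] at h0
    have h1 := congrArg Subtype.val h0
    simp [a] at h1
  obtain ⟨z, hz1, hz2⟩ := Set.not_disjoint_iff.mp hdis
  obtain ⟨y, rfl⟩ := Ideal.mem_span_singleton'.mp hz1
  obtain ⟨_, ⟨n, rfl⟩, s, hs, hns⟩ := Submonoid.mem_sup.mp hz2
  -- `(1/X₀)ⁿ s = y (1/X₁)` is impossible when `X₁` has weight `n + 1` and `X₀` has weight `1`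
  obtain ⟨v, hv, hvC, hvX⟩ := exists_weight_valuation K F ![1, n + 1] (by
    intro i; fin_cases i <;> simp)
  obtain ⟨hv1, hv2⟩ := hint v hv hvC
  have h := congrArg (fun r : R => v r) hns
  simp only [Subring.coe_mul, Subring.coe_pow, map_mul, map_pow, hv2 s hs, mul_one, a,
    map_inv₀, hvX] at h
  have h2 : v y * (exp ((![1, n + 1] 1 : ℕ) : ℤ))⁻¹ ≤ (exp ((![1, n + 1] 1 : ℕ) : ℤ))⁻¹ :=
    mul_le_of_le_one_left' (hv1 y)
  rw [← h, ← exp_neg, ← exp_neg, ← exp_nsmul, exp_le_exp] at h2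
  simp at h2

/-! ### Noetherianity of the localization -/

/-- The reciprocal complement of `T` has the same fraction field as `T`. -/
theorem isFractionRing_recip (T F : Type*) [CommRing T] [IsDomain T] [Field F] [Algebra T F]
    [IsFractionRing T F] : IsFractionRing (ReciprocalComplement T F) F := by
  refine IsFractionRing.of_field _ F fun z => ?_
  by_cases hz : z = 0
  · exact ⟨0, 1, by simp [hz]⟩
  obtain ⟨x, y, hy, rfl⟩ := IsFractionRing.div_surjective T z
  have hy0 : y ≠ 0 := nonZeroDivisors.ne_zero hy
  have hx0 : x ≠ 0 := by
    rintro rfl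
    simp at hz
  refine ⟨⟨_, inv_mem_recip hy0⟩, ⟨_, inv_mem_recip hx0⟩, ?_⟩
  change _ = (algebraMap T F y)⁻¹ / (algebraMap T F x)⁻¹
  rw [inv_div_inv]

/-- The localization of `R(K[X, Y])` at a height one prime is Noetherian. -/
theorem isNoetherianRing_localization (K : Type*) [Field K]
    (F : Type*) [Field F] [Algebra (MvPolynomial (Fin 2) K) F]
    [IsFractionRing (MvPolynomial (Fin 2) K) F]
    (p : Ideal (ReciprocalComplement (MvPolynomial (Fin 2) K) F)) [hp : p.IsPrime]
    (hht : Order.height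
      (⟨p, hp⟩ : PrimeSpectrum (ReciprocalComplement (MvPolynomial (Fin 2) K) F)) = 1) :
    IsNoetherianRing (Localization.AtPrime p) := by
  obtain ⟨f, hf0, hfC, hfp⟩ := exists_recip_notMem K F p hp hht
  have hfrac := isFractionRing_recip (MvPolynomial (Fin 2) K) F
  -- the localization `R_p`, realized inside `F`
  let B := Localization.subalgebra.ofField F p.primeCompl p.primeCompl_le_nonZeroDivisors
  have hBmem : ∀ x : F, x ∈ B ↔ ∃ (a s : ReciprocalComplement (MvPolynomial (Fin 2) K) F)
    (_ : s ∈ p.primeCompl), x = a * (s : F)⁻¹ := fun x => Iff.rfl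
  have hloc : IsLocalization.AtPrime B p :=
    Localization.subalgebra.isLocalization_ofField F p.primeCompl p.primeCompl_le_nonZeroDivisors
  -- `K(f)` is contained in `B`
  let _ : Algebra K F := ((algebraMap (MvPolynomial (Fin 2) K) F).comp MvPolynomial.C).toAlgebra
  have _ : IsScalarTower K (MvPolynomial (Fin 2) K) F := IsScalarTower.of_algebraMap_eq' rfl
  have hRB : ∀ x ∈ ReciprocalComplement (MvPolynomial (Fin 2) K) F, x ∈ B := fun x hx =>
    B.algebraMap_mem ⟨x, hx⟩
  set h := algebraMap (MvPolynomial (Fin 2) K) F f with hh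
  have hfB : h ∈ B := (hBmem h).mpr ⟨1, _, hfp, by simp [hh]⟩
  have hpoly : ∀ q : Polynomial K, Polynomial.aeval h q ∈ B := fun q => by
    rw [Polynomial.aeval_eq_sum_range]
    refine sum_mem fun i _ => ?_
    rw [Algebra.smul_def]
    exact mul_mem (hRB _ (const_mem_recip _)) (pow_mem hfB _)
  have hinv : ∀ q : Polynomial K, (Polynomial.aeval h q)⁻¹ ∈ B := fun q => by
    rw [hh, Polynomial.aeval_algebraMap_apply]
    by_cases hq : Polynomial.aeval f q = 0
    · rw [hq, map_zero, inv_zero]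
      exact zero_mem _
    · exact hRB _ (inv_mem_recip hq)
  have hLB : ∀ x ∈ IntermediateField.adjoin K {h}, x ∈ B := fun x hx => by
    obtain ⟨r, s, rfl⟩ := IntermediateField.mem_adjoin_simple_iff K x |>.mp hx
    rw [div_eq_mul_inv]
    exact mul_mem (hpoly r) (hinv s)
  let _ : Algebra (IntermediateField.adjoin K {h}) B :=
    ((algebraMap (IntermediateField.adjoin K {h}) F).codRestrict B
      fun x => hLB _ x.2).toAlgebra
  have _ : IsScalarTower (IntermediateField.adjoin K {h}) B F := IsScalarTower.of_algebraMap_eq' rfl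
  have hinj : Function.Injective (algebraMap B F) := Subtype.val_injective
  -- a nonconstant `f` is transcendental over `K`: its degree valuation exceeds `1`
  have hhT : Transcendental K h := by
    intro halg
    obtain ⟨v, hv, hvC, -⟩ := exists_weight_valuation K F 1 (fun _ => one_pos)
    have hK : ∀ c : K, v (algebraMap K F c) ≤ 1 := fun c => by
      by_cases hc : c = 0
      · simp [hc]
      · exact (hvC c hc).le
    obtain ⟨q, hq, hq0⟩ := halg.isIntegral
    have hx : h ∈ v.integer := by
      refine (Valuation.integer.integers v).mem_of_integral (O := v.integer) ?_
      refine ⟨q.map ((algebraMap K F).codRestrict v.integer hK), hq.map _, ?_⟩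
      rw [Polynomial.eval₂_map]
      exact hq0
    exact absurd (hv f hfC) (not_lt.mpr hx)
  refine @isNoetherianRing_of_ringEquiv B _ _ _
    (IsLocalization.algEquiv p.primeCompl B (Localization.AtPrime p)).toRingEquiv ?_
  refine IsNoetherianRing.of_prime_ne_bot fun I hI hI0 => ?_
  obtain ⟨t, htI, ht0⟩ := Submodule.exists_mem_ne_zero_of_ne_bot hI0
  -- a nonzero nonunit `t` of `B` is transcendental over the subfield `K(f)` of `B`
  have htT : Transcendental (IntermediateField.adjoin K {h}) (algebraMap B F t) := by
    intro halg
    have h1 : IsAlgebraic (IntermediateField.adjoin K {h}) t :=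
      (isAlgebraic_algebraMap_iff hinj).mp halg
    exact hI.ne_top (Ideal.eq_top_of_isUnit_mem _ htI
      (IsIntegral.isUnit h1.isIntegral ht0))
  have := finite_over_adjoin_pair K F hhT htT
  exact fg_of_mem_of_finite (L := IntermediateField.adjoin K {h}) hinj ht0 I htI

/-- For the reciprocal complement `R` of `K[X, Y]`, the localization of `R` at any height
one prime ideal is a Noetherian local integral domain of Krull dimension one. -/
theorem recip_polynomialRing_two_localization_at_height_one (K : Type*) [Field K]
    (F : Type*) [Field F] [Algebra (MvPolynomial (Fin 2) K) F]
    [IsFractionRing (MvPolynomial (Fin 2) K) F]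
    (p : Ideal (ReciprocalComplement (MvPolynomial (Fin 2) K) F)) (hp : p.IsPrime)
    (hht : Order.height
      (⟨p, hp⟩ : PrimeSpectrum (ReciprocalComplement (MvPolynomial (Fin 2) K) F)) = 1) :
    IsNoetherianRing (Localization.AtPrime p) ∧ IsLocalRing (Localization.AtPrime p) ∧
      IsDomain (Localization.AtPrime p) ∧ ringKrullDim (Localization.AtPrime p) = 1 := by
  refine ⟨isNoetherianRing_localization K F p hht, inferInstance,
    IsLocalization.isDomain_localization p.primeCompl_le_nonZeroDivisors, ?_⟩
  rw [IsLocalization.AtPrime.ringKrullDim_eq_height p]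
  exact congrArg _ ((PrimeSpectrum.height_eq_orderHeight ⟨p, hp⟩).trans hht)
end

section
/- Let K be a field and let R = R(K[X, Y]) be the reciprocal complement of the polynomial ring in two variables. Then every finitely generated proper ideal I of R is contained in all but finitely many prime ideals of R; that is, the set of prime ideals of R that do not contain I is finite. -/
namespace ReciprocalComplement

variable {T F : Type*} [CommRing T] [Field F] [Algebra T F]

variable (F) in
/-- The reciprocal `1 / f` as an element of the reciprocal complement, with `1 / 0 = 0`. -/
def recip (f : T) : ReciprocalComplement T F :=
  ⟨(algebraMap T F f)⁻¹, by
    by_cases hf : f = 0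
    · simp [hf, zero_mem]
    · exact Subring.subset_closure ⟨f, hf, rfl⟩⟩

@[simp]
lemma coe_recip (f : T) : ((recip F f : ReciprocalComplement T F) : F) = (algebraMap T F f)⁻¹ := rfl

lemma recip_mul (f g : T) : recip F (f * g) = recip F f * recip F g :=
  Subtype.ext (by simp [mul_comm])

/-- The set of elements `f` of `T` that are zero or whose reciprocal lies outside `P`. -/
def recipSupport (P : Ideal (ReciprocalComplement T F)) : Set T :=
  {f | recip F f ∈ P → f = 0}

variable {P : Ideal (ReciprocalComplement T F)}

lemma mem_recipSupport_of_dvd {f g : T} (hg : g ∈ recipSupport P) (hg0 : g ≠ 0) (h : f ∣ g) :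
    f ∈ recipSupport P := by
  obtain ⟨k, rfl⟩ := h
  intro hf
  exact absurd (hg (by rw [recip_mul]; exact P.mul_mem_right _ hf)) hg0

lemma mul_mem_recipSupport [hP : P.IsPrime] {f g : T} (hf : f ∈ recipSupport P)
    (hg : g ∈ recipSupport P) : f * g ∈ recipSupport P := by
  intro h
  rw [recip_mul] at h
  rcases hP.mem_or_mem h with h | h
  · simp [hf h]
  · simp [hg h]

lemma add_mem_recipSupport [IsFractionRing T F] [hP : P.IsPrime] {f g : T} (hf : f ∈ recipSupport P)
    (hg : g ∈ recipSupport P) : f + g ∈ recipSupport P := by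
  intro h
  by_contra hfg
  have hinj := FaithfulSMul.algebraMap_injective T F
  by_cases hf0 : f = 0
  · subst hf0; rw [zero_add] at h hfg; exact hfg (hg h)
  by_cases hg0 : g = 0
  · subst hg0; rw [add_zero] at h hfg; exact hfg (hf h)
  have h1 : algebraMap T F f ≠ 0 := (map_ne_zero_iff _ hinj).2 hf0
  have h2 : algebraMap T F g ≠ 0 := (map_ne_zero_iff _ hinj).2 hg0
  have h3 : algebraMap T F f + algebraMap T F g ≠ 0 := by
    rw [← map_add]; exact (map_ne_zero_iff _ hinj).2 hfg
  have key : recip F f * recip F g = (recip F f + recip F g) * recip F (f + g) := by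
    apply Subtype.ext
    simp only [Subring.coe_mul, Subring.coe_add, coe_recip, map_add]
    field_simp
    ring
  have : recip F f * recip F g ∈ P := key ▸ P.mul_mem_left _ h
  rcases hP.mem_or_mem this with h | h
  exacts [hf0 (hf h), hg0 (hg h)]

lemma algebraMap_mem_recipSupport {K : Type*} [Field K] [Algebra K T] [hP : P.IsPrime] (c : K) :
    algebraMap K T c ∈ recipSupport P := by
  intro h
  by_contra hc
  have hc0 : c ≠ 0 := by rintro rfl; simp at hc
  apply hP.one_notMem
  have : (1 : ReciprocalComplement T F) = recip F (algebraMap K T c * algebraMap K T c⁻¹) := by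
    rw [← map_mul, mul_inv_cancel₀ hc0]
    exact Subtype.ext (by simp)
  rw [this, recip_mul]
  exact P.mul_mem_right _ h

lemma neg_mem_recipSupport {f : T} (hf : f ∈ recipSupport P) : -f ∈ recipSupport P := by
  intro h
  have : recip F f = -recip F (-f) := Subtype.ext (by simp [inv_neg])
  simpa using hf (this ▸ P.neg_mem h)

lemma one_mem_recipSupport [hP : P.IsPrime] : (1 : T) ∈ recipSupport P := by
  intro h
  have : recip F (1 : T) = 1 := Subtype.ext (by simp)
  exact absurd (this ▸ h) hP.one_notMem

/-- The set `recipSupport P`, for `P` prime, as a subalgebra over a field contained in `T`. -/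
def recipSubalgebra (K : Type*) [Field K] [Algebra K T] [IsFractionRing T F]
    (P : Ideal (ReciprocalComplement T F)) [P.IsPrime] : Subalgebra K T where
  carrier := recipSupport P
  mul_mem' := mul_mem_recipSupport
  add_mem' := add_mem_recipSupport
  algebraMap_mem' := algebraMap_mem_recipSupport

/-- A nonzero algebraic element divides a nonzero element of the base, so the divisor-closed set
`recipSupport P` is algebraically closed in `T`. -/
lemma mem_recipSupport_of_isAlgebraic [IsDomain T] {A : Type*} [CommRing A]
    [Algebra A T] [FaithfulSMul A T]
    (hA : ∀ a : A, algebraMap A T a ∈ recipSupport P) {h : T} (hh : IsAlgebraic A h) :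
    h ∈ recipSupport P := by
  by_cases h0 : h = 0
  · exact fun _ => h0
  obtain ⟨r, hr, hdvd⟩ := hh.exists_nonzero_dvd (mem_nonZeroDivisors_of_ne_zero h0)
  exact mem_recipSupport_of_dvd (hA r)
    ((map_ne_zero_iff _ (FaithfulSMul.algebraMap_injective A T)).2 hr) hdvd

/-- Modulo the reciprocals of the elements outside `recipSupport P`, every element of the reciprocal
complement is a fraction of elements of `recipSupport P`. -/
lemma exists_sub_mem_span [IsDomain T] [IsFractionRing T F] [hP : P.IsPrime]
    (r : ReciprocalComplement T F) :
    ∃ u ∈ Ideal.span (recip F '' (recipSupport P)ᶜ), ∃ a ∈ recipSupport P, ∃ b ∈ recipSupport P,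
      b ≠ 0 ∧ ((r - u : ReciprocalComplement T F) : F) = algebraMap T F a / algebraMap T F b := by
  have hinj := FaithfulSMul.algebraMap_injective T F
  have one_mem : (1 : T) ∈ recipSupport P := one_mem_recipSupport
  have zero_mem' : (0 : T) ∈ recipSupport P := fun _ => rfl
  obtain ⟨r, hr⟩ := r
  induction hr using Subring.closure_induction with
  | mem x hx =>
    obtain ⟨f, hf, rfl⟩ := hx
    by_cases hfS : f ∈ recipSupport P
    · exact ⟨0, zero_mem _, 1, one_mem, f, hfS, hf, by simp⟩
    · refine ⟨recip F f, Ideal.subset_span ⟨f, hfS, rfl⟩, 0, zero_mem', 1, one_mem, one_ne_zero, ?_⟩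
      simp
  | zero => exact ⟨0, zero_mem _, 0, zero_mem', 1, one_mem, one_ne_zero, by simp⟩
  | one => exact ⟨0, zero_mem _, 1, one_mem, 1, one_mem, one_ne_zero, by simp⟩
  | neg x hx ih =>
    obtain ⟨u, hu, a, ha, b, hb, hb0, e⟩ := ih
    refine ⟨-u, neg_mem hu, -a, neg_mem_recipSupport ha, b, hb, hb0, ?_⟩
    simp only [AddSubgroupClass.coe_sub, Subring.coe_neg, map_neg] at e ⊢
    rw [neg_div, ← e]; ring
  | add x y hx hy ihx ihy =>
    obtain ⟨u, hu, a, ha, b, hb, hb0, e⟩ := ihx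
    obtain ⟨v, hv, c, hc, d, hd, hd0, k⟩ := ihy
    have hb1 : algebraMap T F b ≠ 0 := (map_ne_zero_iff _ hinj).2 hb0
    have hd1 : algebraMap T F d ≠ 0 := (map_ne_zero_iff _ hinj).2 hd0
    refine ⟨u + v, add_mem hu hv, a * d + b * c,
      add_mem_recipSupport (mul_mem_recipSupport ha hd) (mul_mem_recipSupport hb hc),
      b * d, mul_mem_recipSupport hb hd, mul_ne_zero hb0 hd0, ?_⟩
    simp only [AddSubgroupClass.coe_sub, Subring.coe_add, map_add, map_mul] at e k ⊢
    rw [← div_add_div _ _ hb1 hd1, ← e, ← k]; ring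
  | mul x y hx hy ihx ihy =>
    obtain ⟨u, hu, a, ha, b, hb, hb0, e⟩ := ihx
    obtain ⟨v, hv, c, hc, d, hd, hd0, k⟩ := ihy
    -- `x * y - (x - u) * (y - v) = u * y + (x - u) * v`
    refine ⟨u * ⟨y, hy⟩ + (⟨x, hx⟩ - u) * v,
      add_mem (Ideal.mul_mem_right _ _ hu) (Ideal.mul_mem_left _ _ hv), a * c,
      mul_mem_recipSupport ha hc, b * d, mul_mem_recipSupport hb hd, mul_ne_zero hb0 hd0, ?_⟩
    simp only [AddSubgroupClass.coe_sub, Subring.coe_add, Subring.coe_mul, map_mul] at e k ⊢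
    rw [← div_mul_div_comm, ← e, ← k]; ring

/-- A prime is determined by `recipSupport P`: a nonzero fraction of elements of `recipSupport P` does
not lie in `P`, so by `exists_sub_mem_span` every element of `P` lies in the ideal on the right. -/
lemma eq_span_of_isPrime [IsDomain T] [IsFractionRing T F] [hP : P.IsPrime] :
    P = Ideal.span (recip F '' (recipSupport P)ᶜ) := by
  have hle : Ideal.span (recip F '' (recipSupport P)ᶜ) ≤ P := by
    rw [Ideal.span_le]
    rintro _ ⟨g, hg, rfl⟩
    by_contra h
    exact hg fun h' => absurd h' h
  refine le_antisymm (fun r hr => ?_) hle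
  obtain ⟨u, hu, a, ha, b, hb, hb0, e⟩ := exists_sub_mem_span (P := P) r
  have hinj := FaithfulSMul.algebraMap_injective T F
  have hb1 : algebraMap T F b ≠ 0 := (map_ne_zero_iff _ hinj).2 hb0
  by_cases ha0 : a = 0
  · have : r = u := by
      rw [← sub_eq_zero]
      exact Subtype.ext (by rw [e]; simp [ha0])
    exact this ▸ hu
  · have ha1 : algebraMap T F a ≠ 0 := (map_ne_zero_iff _ hinj).2 ha0
    have : recip F b = (r - u) * recip F a := by
      apply Subtype.ext
      rw [Subring.coe_mul, e, coe_recip, coe_recip]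
      field_simp
    exact absurd (hb (this ▸ P.mul_mem_right _ (P.sub_mem hr (hle hu)))) hb0

variable (T F) in
lemma injOn_recipSupport [IsDomain T] [IsFractionRing T F] :
    Set.InjOn recipSupport {P : Ideal (ReciprocalComplement T F) | P.IsPrime} := by
  intro P hP Q hQ h
  have : P.IsPrime := hP
  have : Q.IsPrime := hQ
  rw [eq_span_of_isPrime (P := P), eq_span_of_isPrime (P := Q), h]

/-- There are in fact at most two such primes: `recipSupport P` is either the algebraic closure of `K[f]`
in `T` or all of `T`, and it determines `P`. -/
lemma finite_primes_recip_notMem {K : Type*} [Field K] [IsDomain T] [IsFractionRing T F]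
    [Algebra K T] (htr : Algebra.trdeg K T ≤ 2) {f : T} (hf : Transcendental K f) :
    {P : Ideal (ReciprocalComplement T F) | P.IsPrime ∧ recip F f ∉ P}.Finite := by
  refine Set.Finite.of_finite_image (f := recipSupport) ?_
    ((injOn_recipSupport T F).mono fun P hP => hP.1)
  refine Set.Finite.subset
    (Set.toFinite {{g : T | IsAlgebraic (Algebra.adjoin K {f}) g}, Set.univ}) ?_
  rintro _ ⟨P, ⟨hP, hfP⟩, rfl⟩
  have hP : P.IsPrime := hP
  have hfS : f ∈ recipSubalgebra K P := fun h => absurd h hfP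
  by_cases hall : ∀ g ∈ recipSupport P, IsAlgebraic (Algebra.adjoin K {f}) g
  · left
    refine Set.Subset.antisymm hall fun g hg => ?_
    have hle : Algebra.adjoin K {f} ≤ recipSubalgebra K P :=
      Algebra.adjoin_le (Set.singleton_subset_iff.2 hfS)
    exact mem_recipSupport_of_isAlgebraic (fun a => hle a.2) hg
  · right
    push Not at hall
    obtain ⟨g, hgS, hg⟩ := hall
    -- `f` and `g` form a transcendence basis of `T` inside `recipSupport P`
    have h1 : AlgebraicIndependent K (fun _ : Unit => f) :=
      algebraicIndependent_unique_type_iff.2 hf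
    have h2 : AlgebraicIndependent K (fun o : Option Unit => o.elim g fun _ => f) :=
      AlgebraicIndependent.option_iff.2 ⟨h1, by rwa [Set.range_const]⟩
    have h3 := h2.isTranscendenceBasis_of_lift_trdeg_le_of_finite (by
      simpa [one_add_one_eq_two] using htr)
    have := h3.isAlgebraic
    have hle : Algebra.adjoin K (Set.range fun o : Option Unit => o.elim g fun _ => f) ≤
        recipSubalgebra K P := by
      refine Algebra.adjoin_le ?_
      rintro _ ⟨_ | _, rfl⟩
      exacts [hgS, hfS]
    exact Set.eq_univ_of_forall fun h =>
      mem_recipSupport_of_isAlgebraic (fun a => hle a.2) (this.isAlgebraic h)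

end ReciprocalComplement

open ReciprocalComplement in
/-- Every finitely generated proper ideal of the reciprocal complement `R` of `K[X, Y]`
is contained in all but finitely many prime ideals of `R`: the set of prime ideals not
containing it is finite. -/
theorem recip_polynomialRing_two_cofinite_primes (K : Type*) [Field K]
    (F : Type*) [Field F] [Algebra (MvPolynomial (Fin 2) K) F]
    [IsFractionRing (MvPolynomial (Fin 2) K) F]
    (I : Ideal (ReciprocalComplement (MvPolynomial (Fin 2) K) F)) (hfg : I.FG) (hne : I ≠ ⊤) :
    {p : Ideal (ReciprocalComplement (MvPolynomial (Fin 2) K) F) |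
      p.IsPrime ∧ ¬ I ≤ p}.Finite := by
  obtain ⟨M, hM, hIM⟩ := Ideal.exists_le_maximal I hne
  have hMp := hM.isPrime
  have key : ∀ r ∈ M, {p : Ideal (ReciprocalComplement (MvPolynomial (Fin 2) K) F) |
      p.IsPrime ∧ r ∉ p}.Finite := by
    intro r hr
    rw [eq_span_of_isPrime (P := M)] at hr
    induction hr using Submodule.span_induction with
    | mem x hx =>
      obtain ⟨g, hg, rfl⟩ := hx
      exact finite_primes_recip_notMem (K := K) (by simp [MvPolynomial.trdeg_of_isDomain])
        fun halg => hg (mem_recipSupport_of_isAlgebraic algebraMap_mem_recipSupport halg)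
    | zero => simp
    | add x y _ _ hx hy =>
      refine (hx.union hy).subset fun p ⟨hp, h⟩ => ?_
      by_contra hc
      simp only [Set.mem_union, Set.mem_ofPred_eq, hp, true_and, not_or, not_not] at hc
      exact h (p.add_mem hc.1 hc.2)
    | smul a x _ hx =>
      exact hx.subset fun p ⟨hp, h⟩ => ⟨hp, fun hc => h (p.mul_mem_left a hc)⟩
  obtain ⟨s, rfl⟩ := hfg
  refine (s.finite_toSet.biUnion fun r hr => key r (hIM (Ideal.subset_span hr))).subset ?_
  rintro p ⟨hp, h⟩
  obtain ⟨r, hr, hrp⟩ := Set.not_subset.1 (mt Ideal.span_le.2 h)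
  exact Set.mem_biUnion hr ⟨hp, hrp⟩
end
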